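/- Let f ∈ ℬ be convenient and Newton nondegenerate. Then for every β ∈ ℚ the set {v ∈ ℕⁿ : ν(v) = β} is finite, and for every α ∈ ℚ one has dim_ℂ gr^𝒩_α(ℬ/ℒ) = Σ_{k=0}^{n} (−1)^k · binom(n,k) · card{v ∈ ℕⁿ : ν(v) = α − k} (equality in ℤ). Equivalently, the Hilbert–Poincaré series of the graded ring gr^𝒩(ℬ/ℒ) equals (1−z)^n · Σ_{v ∈ ℕⁿ} z^{ν(v)}. -/

import Mathlib

open MvPolynomial

namespace ToricNewton

section
variable {σ : Type*} [Fintype σ] [DecidableEq σ]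

/-- Coercion of a lattice point of `ℕ^σ` into `ℝ^σ`. -/
def natToR (v : σ → ℕ) : σ → ℝ := fun i => (v i : ℝ)

/-- Coercion of an exponent (finitely supported) into `ℝ^σ`. -/
def toR (m : σ →₀ ℕ) : σ → ℝ := fun i => (m i : ℝ)

/-- The Newton polytope of a polynomial: the convex hull of `{0} ∪ supp f`. -/
noncomputable def newtonPolytope (f : MvPolynomial σ ℂ) : Set (σ → ℝ) :=
  convexHull ℝ ({0} ∪ (toR '' (f.support : Set (σ →₀ ℕ))))

/-- The Newton function `ν`, which for a convenient polynomial is the gauge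
(Minkowski functional) of the Newton polytope. -/
noncomputable def nu (f : MvPolynomial σ ℂ) (x : σ → ℝ) : ℝ :=
  gauge (newtonPolytope f) x

/-- `f` is convenient if for each variable `i` some pure power `uᵢ^k`, `k ≥ 1`,
occurs in `f` with nonzero coefficient. -/
def Convenient (f : MvPolynomial σ ℂ) : Prop :=
  ∀ i : σ, ∃ k : ℕ, 1 ≤ k ∧ f.coeff (Finsupp.single i k) ≠ 0

/-- `Δ` is a (nonempty exposed) closed face of `P`. -/
def IsFace (P Δ : Set (σ → ℝ)) : Prop :=
  Δ.Nonempty ∧ ∃ (l : (σ → ℝ) →ₗ[ℝ] ℝ) (c : ℝ),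
    (∀ x ∈ P, l x ≤ c) ∧ Δ = {x ∈ P | l x = c}

/-- A face of the Newton boundary: a closed face of the Newton polytope not
containing the origin. -/
def NBFace (f : MvPolynomial σ ℂ) (Δ : Set (σ → ℝ)) : Prop :=
  IsFace (newtonPolytope f) Δ ∧ (0 : σ → ℝ) ∉ Δ

open Classical in
/-- The truncation `g_Δ` of `g` to the monomials whose exponents lie in `Δ`. -/
noncomputable def faceRestrict (Δ : Set (σ → ℝ)) (g : MvPolynomial σ ℂ) : MvPolynomial σ ℂ :=
  ∑ m ∈ g.support, if toR m ∈ Δ then monomial m (g.coeff m) else 0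

/-- `f` is Newton nondegenerate: for every closed face `Δ` of the Newton boundary
the system `(u₁ ∂f/∂u₁)_Δ = ⋯ = (uₙ ∂f/∂uₙ)_Δ = 0` has no solution in `(ℂ*)ⁿ`. -/
def Nondegenerate (f : MvPolynomial σ ℂ) : Prop :=
  ∀ Δ : Set (σ → ℝ), NBFace f Δ →
    ¬ ∃ x : σ → ℂ, (∀ i, x i ≠ 0) ∧
        ∀ i, eval x (faceRestrict Δ (X i * pderiv i f)) = 0

/-- The ideal `ℒ` generated by the `uᵢ ∂f/∂uᵢ`. -/
noncomputable def LIdeal (f : MvPolynomial σ ℂ) : Ideal (MvPolynomial σ ℂ) :=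
  Ideal.span (Set.range fun i => X i * pderiv i f)

/-- The Jacobian ideal `ℐ` generated by the `∂f/∂uᵢ`. -/
noncomputable def IIdeal (f : MvPolynomial σ ℂ) : Ideal (MvPolynomial σ ℂ) :=
  Ideal.span (Set.range fun i => pderiv i f)

/-- The Newton filtration `𝒩_α ℬ`: the span of the monomials `u^m` with `ν(m) ≤ α`. -/
noncomputable def Nle (f : MvPolynomial σ ℂ) (α : ℝ) : Submodule ℂ (MvPolynomial σ ℂ) where
  carrier := {g | ∀ m ∈ g.support, nu f (toR m) ≤ α}
  zero_mem' := by simp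
  add_mem' := by
    intro a b ha hb m hm
    rcases Finset.mem_union.mp (MvPolynomial.support_add hm) with h | h
    · exact ha m h
    · exact hb m h
  smul_mem' := by
    intro c a ha m hm
    exact ha m (MvPolynomial.support_smul hm)

/-- The filtration `𝒩_{<α} ℬ`. -/
noncomputable def Nlt (f : MvPolynomial σ ℂ) (α : ℝ) : Submodule ℂ (MvPolynomial σ ℂ) where
  carrier := {g | ∀ m ∈ g.support, nu f (toR m) < α}
  zero_mem' := by simp
  add_mem' := by
    intro a b ha hb m hm
    rcases Finset.mem_union.mp (MvPolynomial.support_add hm) with h | h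
    · exact ha m h
    · exact hb m h
  smul_mem' := by
    intro c a ha m hm
    exact ha m (MvPolynomial.support_smul hm)

/-- The twisted filtration `W_α ℬ`: the span of the monomials `u^m` with
`ν(m + (1,…,1)) ≤ α`. -/
noncomputable def Wle (f : MvPolynomial σ ℂ) (α : ℝ) : Submodule ℂ (MvPolynomial σ ℂ) where
  carrier := {g | ∀ m ∈ g.support, nu f (toR m + 1) ≤ α}
  zero_mem' := by simp
  add_mem' := by
    intro a b ha hb m hm
    rcases Finset.mem_union.mp (MvPolynomial.support_add hm) with h | h
    · exact ha m h
    · exact hb m h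
  smul_mem' := by
    intro c a ha m hm
    exact ha m (MvPolynomial.support_smul hm)

/-- The twisted filtration `W_{<α} ℬ`. -/
noncomputable def Wlt (f : MvPolynomial σ ℂ) (α : ℝ) : Submodule ℂ (MvPolynomial σ ℂ) where
  carrier := {g | ∀ m ∈ g.support, nu f (toR m + 1) < α}
  zero_mem' := by simp
  add_mem' := by
    intro a b ha hb m hm
    rcases Finset.mem_union.mp (MvPolynomial.support_add hm) with h | h
    · exact ha m h
    · exact hb m h
  smul_mem' := by
    intro c a ha m hm
    exact ha m (MvPolynomial.support_smul hm)

/-- The graded piece `gr^𝒩_α(ℬ/ℒ) = (𝒩_α ℬ + ℒ)/(𝒩_{<α} ℬ + ℒ)`, realized as the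
image of `𝒩_α ℬ + ℒ` in `ℬ/(𝒩_{<α} ℬ + ℒ)`. -/
noncomputable def grN (f : MvPolynomial σ ℂ) (α : ℝ) :
    Submodule ℂ (MvPolynomial σ ℂ ⧸ (Nlt f α ⊔ (LIdeal f).restrictScalars ℂ)) :=
  Submodule.map (Nlt f α ⊔ (LIdeal f).restrictScalars ℂ).mkQ
    (Nle f α ⊔ (LIdeal f).restrictScalars ℂ)

/-- `dim_ℂ gr^𝒩_α(ℬ/ℒ)`. -/
noncomputable def grDim (f : MvPolynomial σ ℂ) (α : ℝ) : ℕ :=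
  Module.finrank ℂ (grN f α)

/-- The graded piece `gr^W_α(ℬ/ℐ) = (W_α ℬ + ℐ)/(W_{<α} ℬ + ℐ)`. -/
noncomputable def grW (f : MvPolynomial σ ℂ) (α : ℝ) :
    Submodule ℂ (MvPolynomial σ ℂ ⧸ (Wlt f α ⊔ (IIdeal f).restrictScalars ℂ)) :=
  Submodule.map (Wlt f α ⊔ (IIdeal f).restrictScalars ℂ).mkQ
    (Wle f α ⊔ (IIdeal f).restrictScalars ℂ)

/-- `dim_ℂ gr^W_α(ℬ/ℐ)`. -/
noncomputable def grWDim (f : MvPolynomial σ ℂ) (α : ℝ) : ℕ :=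
  Module.finrank ℂ (grW f α)

/-- The dimension of a face, i.e. of the direction of its affine span. -/
noncomputable def faceDim (Δ : Set (σ → ℝ)) : ℕ :=
  Module.finrank ℝ (affineSpan ℝ Δ).direction

/-- `Δ` is a simplex: the convex hull of an affinely independent family. -/
def IsSimplex (Δ : Set (σ → ℝ)) : Prop :=
  ∃ (k : ℕ) (p : Fin (k + 1) → (σ → ℝ)), AffineIndependent ℝ p ∧ Δ = convexHull ℝ (Set.range p)

/-- The union of the coordinate hyperplanes. -/
def coordHyperplanes (σ : Type*) : Set (σ → ℝ) := ⋃ i : σ, {x : σ → ℝ | x i = 0}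

/-- `Box(Δ)`: the set of combinations `Σ q_ℓ b_ℓ`, `q_ℓ ∈ [0,1)`, of the vertices
(extreme points) of `Δ`. -/
def Box (Δ : Set (σ → ℝ)) : Set (σ → ℝ) :=
  {x | ∃ s : Finset (σ → ℝ), ↑s ⊆ Δ.extremePoints ℝ ∧
      ∃ q : (σ → ℝ) → ℝ, (∀ b ∈ s, 0 ≤ q b ∧ q b < 1) ∧ x = ∑ b ∈ s, q b • b}

/-- `Δ ∈ ℱ(P)`: a closed face of the Newton polytope of `f` not contained in the
union of the coordinate hyperplanes. -/
def FcalMem (f : MvPolynomial σ ℂ) (Δ : Set (σ → ℝ)) : Prop :=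
  IsFace (newtonPolytope f) Δ ∧ ¬ Δ ⊆ coordHyperplanes σ

/-- `Box(P)`: the union of `Box(Δ)` over the closed faces of the Newton boundary
not contained in the union of the coordinate hyperplanes. -/
def BoxP (f : MvPolynomial σ ℂ) : Set (σ → ℝ) :=
  ⋃ Δ ∈ {Δ : Set (σ → ℝ) | NBFace f Δ ∧ ¬ Δ ⊆ coordHyperplanes σ}, Box Δ

/-- The cone `ℝ₊·Δ` over `Δ`. -/
def cone0 (Δ : Set (σ → ℝ)) : Set (σ → ℝ) :=
  {x | ∃ t : ℝ, 0 ≤ t ∧ ∃ y ∈ Δ, x = t • y}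

/-- The restriction of `f` obtained by setting the variables in `S` to zero. -/
noncomputable def restrictZero (S : Finset σ) (f : MvPolynomial σ ℂ) :
    MvPolynomial {j : σ // j ∉ S} ℂ :=
  aeval (fun j : σ => if h : j ∉ S then X (⟨j, h⟩ : {j : σ // j ∉ S}) else 0) f

end

end ToricNewton


namespace ToricNewton

/-- Ideals generated by powers of variables have the expected colon ideals. -/
lemma poly_colon {ι κ : Type*} [CommRing κ] [Nontrivial κ] (J : Finset ι) (i : ι) (hi : i ∉ J) (q : ℕ)
    (a : MvPolynomial ι κ) (r : ι → MvPolynomial ι κ)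
    (h : a * X i ^ q = ∑ j ∈ J, r j * X j ^ q) :
    ∃ r' : ι → MvPolynomial ι κ, a = ∑ j ∈ J, r' j * X j ^ q := by
  classical
  have key : ∀ y : MvPolynomial ι κ,
      y ∈ Ideal.span ((fun s => monomial s (1:κ)) '' ((fun j => Finsupp.single j q) '' (J : Set ι))) ↔
      ∃ r' : ι → MvPolynomial ι κ, y = ∑ j ∈ J, r' j * X j ^ q := by
    intro y
    rw [Set.image_image, ← Finset.coe_image, Ideal.span, Submodule.mem_span_finset']
    constructor
    · rintro ⟨c, hc⟩
      have : y ∈ Ideal.span ((fun j : ι => (X j ^ q : MvPolynomial ι κ)) '' (J : Set ι)) := by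
        rw [← hc]
        refine Ideal.sum_mem _ fun z _ => Ideal.mul_mem_left _ _ (Ideal.subset_span ?_)
        obtain ⟨z, hz⟩ := z
        obtain ⟨j, hj, rfl⟩ := Finset.mem_image.1 hz
        exact ⟨j, hj, by simp [X_pow_eq_monomial]⟩
      rw [Ideal.span, Submodule.mem_span_image_finset_iff_exists_fun] at this
      obtain ⟨c, hc⟩ := this
      refine ⟨fun j => if h : j ∈ J then c ⟨j, h⟩ else 0, ?_⟩
      rw [← hc, ← Finset.sum_coe_sort J]
      refine Finset.sum_congr rfl fun j _ => ?_
      simp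
    · rintro ⟨r', rfl⟩
      rw [← Submodule.mem_span_finset']
      refine Ideal.sum_mem _ fun j hj => Ideal.mul_mem_left _ _ (Ideal.subset_span ?_)
      exact Finset.mem_coe.2 (Finset.mem_image.2 ⟨j, hj, by simp [X_pow_eq_monomial]⟩)
  rw [← key, mem_ideal_span_monomial_image]
  have h2 := (key _).2 ⟨r, h⟩
  rw [mem_ideal_span_monomial_image] at h2
  intro m hm
  have : m + Finsupp.single i q ∈ (a * X i ^ q).support := by
    rw [mem_support_iff, X_pow_eq_monomial, coeff_mul_monomial]
    simpa using hm
  obtain ⟨s, ⟨j, hj, rfl⟩, hs⟩ := h2 _ this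
  refine ⟨_, ⟨j, hj, rfl⟩, ?_⟩
  have hij : i ≠ j := fun h => hi (h ▸ hj)
  have := hs j
  simp only [Finsupp.single_eq_same, Finsupp.add_apply] at this
  rw [Finsupp.single_eq_of_ne hij.symm] at this
  simpa using this

/-- A finite torsion-free module over a domain contains a free submodule with torsion cokernel. -/
lemma exists_free_sub {B M : Type*} [CommRing B] [IsDomain B] [AddCommGroup M] [Module B M]
    [Module.Finite B M] :
    ∃ (c : B) (r : ℕ) (b : Fin r → M), c ≠ 0 ∧ LinearIndependent B b ∧
      ∀ y : M, c • y ∈ Submodule.span B (Set.range b) := by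
  classical
  obtain ⟨k, g, hg⟩ := Module.Finite.exists_fin (R := B) (M := M)
  obtain ⟨I, hI, hmax⟩ := exists_maximal_linearIndepOn B g
  have h1 : ∀ i, ∃ a : B, a ≠ 0 ∧ a • g i ∈ Submodule.span B (g '' I) := by
    intro i
    by_cases hi : i ∈ I
    · exact ⟨1, one_ne_zero, by rw [one_smul]; exact Submodule.subset_span (Set.mem_image_of_mem g hi)⟩
    · exact hmax i hi
  choose a ha0 ha using h1
  let e := Fintype.equivFin I
  refine ⟨∏ i, a i, Fintype.card I, fun i => g (e.symm i), Finset.prod_ne_zero_iff.2 fun i _ => ha0 i,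
    hI.comp _ e.symm.injective, ?_⟩
  have hr : Set.range (fun i => g (e.symm i)) = g '' I := by
    ext z
    constructor
    · rintro ⟨i, rfl⟩; exact ⟨_, (e.symm i).2, rfl⟩
    · rintro ⟨i, hi, rfl⟩; exact ⟨e ⟨i, hi⟩, by simp⟩
  rw [hr]
  intro y
  have hy : y ∈ Submodule.span B (Set.range g) := by rw [hg]; trivial
  induction hy using Submodule.span_induction with
  | mem x hx =>
    obtain ⟨i, rfl⟩ := hx
    rw [← Finset.prod_erase_mul _ _ (Finset.mem_univ i), mul_smul]
    exact Submodule.smul_mem _ _ (ha i)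
  | zero => simp
  | add x y _ _ hx hy => rw [smul_add]; exact Submodule.add_mem _ hx hy
  | smul t x _ hx => rw [smul_comm]; exact Submodule.smul_mem _ _ hx

/-- Colon capturing in characteristic `p`. -/
lemma colon_capture {κ R ι : Type*} [Field κ] [CommRing R] [IsDomain R] [Algebra κ R]
    (p : ℕ) [Fact p.Prime] [CharP R p] (θ : ι → R) (hind : AlgebraicIndependent κ θ)
    (hfin : (aeval θ : MvPolynomial ι κ →ₐ[κ] R).toRingHom.Finite) :
    ∃ c : R, c ≠ 0 ∧ ∀ (J : Finset ι) (i : ι), i ∉ J → ∀ (k : ℕ) (x : R) (r : ι → R),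
      x * θ i = ∑ j ∈ J, r j * θ j →
      ∃ r' : ι → R, c * x ^ p ^ k = ∑ j ∈ J, r' j * θ j ^ p ^ k := by
  classical
  let _ : Algebra (MvPolynomial ι κ) R := (aeval θ : MvPolynomial ι κ →ₐ[κ] R).toRingHom.toAlgebra
  have hsm : ∀ (P : MvPolynomial ι κ) (y : R), P • y = aeval θ P * y := fun P y => rfl
  have : Module.Finite (MvPolynomial ι κ) R := hfin
  obtain ⟨c, s, b, hc, hb, hspan⟩ := exists_free_sub (B := MvPolynomial ι κ) (M := R)
  refine ⟨aeval θ c, fun h => hc (hind (by simpa using h)), ?_⟩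
  intro J i hi k x r h
  set q := p ^ k with hq
  have hpow : x ^ q * θ i ^ q = ∑ j ∈ J, r j ^ q * θ j ^ q := by
    rw [← mul_pow, h, hq, sum_pow_char_pow]
    simp [mul_pow]
  have h1 : ∀ y : R, ∃ α : Fin s → MvPolynomial ι κ, aeval θ c * y = ∑ t, aeval θ (α t) * b t := by
    intro y
    obtain ⟨α, hα⟩ := (Submodule.mem_span_range_iff_exists_fun _).1 (hspan y)
    exact ⟨α, by rw [← hsm, ← hα]; rfl⟩
  choose α hα using h1
  have h2 : ∀ t, α (x ^ q) t * X i ^ q = ∑ j ∈ J, α (r j ^ q) t * X j ^ q := by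
    have hz : ∑ t, (α (x ^ q) t * X i ^ q - ∑ j ∈ J, α (r j ^ q) t * X j ^ q) • b t = 0 := by
      simp only [hsm, map_sub, map_mul, map_pow, aeval_X, map_sum, sub_mul, Finset.sum_sub_distrib]
      rw [sub_eq_zero]
      have e1 : ∑ t, aeval θ (α (x ^ q) t) * θ i ^ q * b t = aeval θ c * (x ^ q * θ i ^ q) := by
        rw [← mul_assoc, hα, Finset.sum_mul]
        exact Finset.sum_congr rfl fun t _ => by ring
      rw [e1, hpow, Finset.mul_sum]
      simp only [Finset.sum_mul]
      rw [Finset.sum_comm]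
      refine Finset.sum_congr rfl fun j _ => ?_
      rw [← mul_assoc, hα, Finset.sum_mul]
      exact Finset.sum_congr rfl fun t _ => by ring
    intro t
    exact sub_eq_zero.1 (Fintype.linearIndependent_iff.1 hb _ hz t)
  choose γ hγ using fun t => poly_colon J i hi q _ _ (h2 t)
  refine ⟨fun j => ∑ t, aeval θ (γ t j) * b t, ?_⟩
  rw [hα]
  simp only [Finset.sum_mul]
  rw [Finset.sum_comm]
  refine Finset.sum_congr rfl fun t _ => ?_
  conv_lhs => rw [hγ t]
  simp only [map_sum, map_mul, map_pow, aeval_X, Finset.sum_mul]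
  exact Finset.sum_congr rfl fun j _ => by ring

end ToricNewton


namespace ToricNewton

/-- The monoid of exponents in a rational polyhedral cone. -/
def coneMon {τ : Type*} [Fintype τ] (Λ : Set (τ → ℤ)) : AddSubmonoid (τ →₀ ℕ) where
  carrier := {a | ∀ l ∈ Λ, 0 ≤ ∑ i, l i * (a i : ℤ)}
  zero_mem' := by intro l _; simp
  add_mem' := by
    intro a b ha hb l hl
    have := ha l hl
    have := hb l hl
    simp only [Finsupp.add_apply, Nat.cast_add, mul_add, Finset.sum_add_distrib]
    lia

lemma mem_coneMon {τ : Type*} [Fintype τ] {Λ : Set (τ → ℤ)} {a : τ →₀ ℕ} :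
    a ∈ coneMon Λ ↔ ∀ l ∈ Λ, 0 ≤ ∑ i, l i * (a i : ℤ) := Iff.rfl

/-- The monoid algebra of `M`, inside the polynomial ring. -/
noncomputable def RM {τ : Type*} (κ : Type*) [CommRing κ] (M : AddSubmonoid (τ →₀ ℕ)) :
    Subalgebra κ (MvPolynomial τ κ) where
  carrier := {g | ∀ a, coeff a g ≠ 0 → a ∈ M}
  mul_mem' := by
    classical
    intro f g hf hg a ha
    rw [coeff_mul] at ha
    obtain ⟨⟨b, c⟩, hbc, h⟩ := Finset.exists_ne_zero_of_sum_ne_zero ha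
    rw [Finset.HasAntidiagonal.mem_antidiagonal] at hbc
    rw [← hbc]
    exact M.add_mem (hf _ (left_ne_zero_of_mul h)) (hg _ (right_ne_zero_of_mul h))
  add_mem' := by
    intro f g hf hg a ha
    by_cases h : coeff a f = 0
    · exact hg a (by simpa [h] using ha)
    · exact hf a h
  algebraMap_mem' := by
    classical
    intro r a ha
    rw [algebraMap_eq, coeff_C] at ha
    have : 0 = a := by by_contra h; simp [h] at ha
    rw [← this]
    exact M.zero_mem

lemma mem_RM {τ κ : Type*} [CommRing κ] {M : AddSubmonoid (τ →₀ ℕ)} {g : MvPolynomial τ κ} :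
    g ∈ RM κ M ↔ ∀ a, coeff a g ≠ 0 → a ∈ M := Iff.rfl

lemma monomial_mem_RM {τ κ : Type*} [CommRing κ] {M : AddSubmonoid (τ →₀ ℕ)} {b : τ →₀ ℕ}
    (hb : b ∈ M) (c : κ) : monomial b c ∈ RM κ M := by
  classical
  intro a ha
  rw [coeff_monomial] at ha
  have : b = a := by by_contra h; simp [h] at ha
  exact this ▸ hb

/-- The toric Cartier-type operator. -/
lemma exists_rho {τ κ : Type*} [CommRing κ] (φ : κ →+ κ) (q : ℕ) (hq : 0 < q) (m0 : τ →₀ ℕ) :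
    ∃ ρ : MvPolynomial τ κ →+ MvPolynomial τ κ,
      ∀ g b, coeff b (ρ g) = φ (coeff (m0 + q • b) g) := by
  classical
  have hinj : Function.Injective (fun b : τ →₀ ℕ => m0 + q • b) := by
    intro a b h
    have h1 : q • a = q • b := by simpa using h
    ext i
    have := DFunLike.congr_fun h1 i
    simp only [Finsupp.smul_apply, smul_eq_mul] at this
    exact Nat.eq_of_mul_eq_mul_left hq this
  have hex : ∀ g : MvPolynomial τ κ, ∃ g' : MvPolynomial τ κ,
      ∀ b, coeff b g' = φ (coeff (m0 + q • b) g) := by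
    intro g
    refine ⟨∑ b ∈ g.support.preimage _ hinj.injOn, monomial b (φ (coeff (m0 + q • b) g)), ?_⟩
    intro b
    rw [coeff_sum]
    simp only [coeff_monomial]
    rw [Finset.sum_ite_eq']
    split_ifs with h
    · rfl
    · have : coeff (m0 + q • b) g = 0 := by simpa [Finset.mem_preimage] using h
      rw [this, map_zero]
  choose ρ hρ using hex
  refine ⟨AddMonoidHom.mk' ρ ?_, fun g b => hρ g b⟩
  intro f g
  ext b
  simp [hρ]

lemma rho_pow_mul {τ κ : Type*} [CommRing κ] (p k : ℕ) [Fact p.Prime] [CharP κ p]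
    (φ : κ →+ κ) (hφ : ∀ a b : κ, φ (a ^ p ^ k * b) = a * φ b) (m0 : τ →₀ ℕ)
    (hm0 : ∀ i, m0 i < p ^ k)
    (ρ : MvPolynomial τ κ →+ MvPolynomial τ κ)
    (hρ : ∀ g b, coeff b (ρ g) = φ (coeff (m0 + (p ^ k) • b) g)) (a h : MvPolynomial τ κ) :
    ρ (a ^ p ^ k * h) = a * ρ h := by
  classical
  induction a using MvPolynomial.induction_on' with
  | add a b ha hb =>
    rw [add_pow_char_pow, add_mul, map_add, ha, hb, add_mul]
  | monomial m α =>
    ext b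
    rw [hρ, monomial_pow, coeff_monomial_mul', coeff_monomial_mul', hρ]
    have hle : (p ^ k • m ≤ m0 + p ^ k • b) ↔ m ≤ b := by
      constructor
      · intro hh i
        have h1 := hh i
        simp only [Finsupp.smul_apply, smul_eq_mul, Finsupp.add_apply] at h1
        have h2 := hm0 i
        by_contra hlt
        push Not at hlt
        have : p ^ k * (b i + 1) ≤ p ^ k * m i := Nat.mul_le_mul_left _ hlt
        rw [mul_add] at this
        lia
      · intro hh i
        have := Nat.mul_le_mul_left (p ^ k) (hh i)
        simp only [Finsupp.smul_apply, smul_eq_mul, Finsupp.add_apply]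
        lia
    by_cases hmb : m ≤ b
    · rw [if_pos (hle.2 hmb), if_pos hmb, hφ]
      congr 3
      ext i
      have := Nat.mul_le_mul_left (p ^ k) (hmb i)
      simp only [Finsupp.coe_tsub, Finsupp.coe_add, Finsupp.coe_smul, Pi.sub_apply, Pi.add_apply, Pi.smul_apply, smul_eq_mul]
      rw [Nat.mul_sub]
      lia
    · rw [if_neg (fun h => hmb (hle.1 h)), if_neg hmb, map_zero]

/-- The toric Frobenius splitting argument. -/
lemma split_argument {τ κ : Type*} [Fintype τ] [Field κ] (p : ℕ) [Fact p.Prime] [CharP κ p]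
    [PerfectRing κ p] (Λ : Set (τ → ℤ)) (hΛ : Λ.Finite) (c : MvPolynomial τ κ) (hc : c ≠ 0) :
    ∃ k : ℕ, ∀ (x : MvPolynomial τ κ) (J : Finset τ) (θ r : τ → MvPolynomial τ κ),
      (∀ j, r j ∈ RM κ (coneMon Λ)) → c * x ^ p ^ k = ∑ j ∈ J, r j * θ j ^ p ^ k →
      ∃ r' : τ → MvPolynomial τ κ, (∀ j, r' j ∈ RM κ (coneMon Λ)) ∧ x = ∑ j ∈ J, r' j * θ j := by
  classical
  obtain ⟨m0, hm0⟩ := MvPolynomial.ne_zero_iff.1 hc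
  have hlt : ∀ K : ℕ, ∃ k, K < p ^ k := fun K =>
    ⟨K, Nat.lt_pow_self (Fact.out : p.Prime).one_lt⟩
  -- a bound
  obtain ⟨K1, hK1⟩ : ∃ K1 : ℕ, ∀ m ∈ c.support, ∀ i, m i < K1 := by
    refine ⟨(c.support.sup fun m => Finset.univ.sup fun i => m i) + 1, fun m hm i => ?_⟩
    rw [Nat.lt_succ_iff]
    exact le_trans (Finset.le_sup (f := fun i => m i) (Finset.mem_univ i))
      (Finset.le_sup (f := fun m : τ →₀ ℕ => Finset.univ.sup fun i => m i) hm)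
  obtain ⟨K2, hK2⟩ : ∃ K2 : ℕ, ∀ l ∈ Λ, ∑ i, l i * (m0 i : ℤ) < K2 := by
    refine ⟨(hΛ.toFinset.sup fun l => (∑ i, l i * (m0 i : ℤ)).toNat) + 1, fun l hl => ?_⟩
    have := Finset.le_sup (f := fun l : τ → ℤ => (∑ i, l i * (m0 i : ℤ)).toNat) (hΛ.mem_toFinset.2 hl)
    lia
  obtain ⟨k, hk⟩ := hlt (K1 + K2)
  refine ⟨k, ?_⟩
  have hm0s : m0 ∈ c.support := by simpa using hm0
  set q := p ^ k with hq
  have hq0 : 0 < q := by lia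
  let φ : κ →+ κ := ((iterateFrobeniusEquiv κ p k).symm : κ →+* κ).toAddMonoidHom
  have hφ : ∀ a b : κ, φ (a ^ q * b) = a * φ b := by
    intro a b
    change (iterateFrobeniusEquiv κ p k).symm (a ^ q * b) = a * (iterateFrobeniusEquiv κ p k).symm b
    rw [map_mul]
    congr 1
    rw [RingEquiv.symm_apply_eq, iterateFrobeniusEquiv_apply, iterateFrobenius_def]
  obtain ⟨ρ, hρ⟩ := exists_rho (κ := κ) φ q hq0 m0
  have hmul := rho_pow_mul p k φ hφ m0 (fun i => by have := hK1 m0 hm0s i; lia) ρ hρ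
  have hmem : ∀ g ∈ RM κ (coneMon Λ), ρ g ∈ RM κ (coneMon Λ) := by
    intro g hg b hb
    rw [hρ] at hb
    have h1 : m0 + q • b ∈ coneMon Λ := hg _ (fun h => hb (by rw [h, map_zero]))
    intro l hl
    have h2 := h1 l hl
    have h3 := hK2 l hl
    simp only [Finsupp.add_apply, Finsupp.smul_apply, smul_eq_mul, Nat.cast_add, Nat.cast_mul,
      mul_add, Finset.sum_add_distrib] at h2
    have h4 : ∑ i, l i * ((q : ℤ) * (b i : ℤ)) = q * ∑ i, l i * (b i : ℤ) := by
      rw [Finset.mul_sum]; exact Finset.sum_congr rfl fun i _ => by ring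
    rw [h4] at h2
    by_contra hneg
    push Not at hneg
    have : (q : ℤ) * (∑ i, l i * (b i : ℤ)) ≤ q * (-1) := by
      apply mul_le_mul_of_nonneg_left <;> lia
    lia
  have hρc : ρ c = C (φ (coeff m0 c)) := by
    ext b
    rw [hρ, coeff_C]
    split_ifs with hb
    · rw [← hb]; simp
    · have : coeff (m0 + q • b) c = 0 := by
        by_contra hne
        apply hb
        ext i
        have := hK1 _ (mem_support_iff.2 hne) i
        simp only [Finsupp.add_apply, Finsupp.smul_apply, smul_eq_mul] at this
        by_contra hbi
        have hbi : 1 ≤ b i := Nat.one_le_iff_ne_zero.2 (by simpa [eq_comm] using hbi)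
        have := Nat.mul_le_mul_left q hbi
        lia
      rw [this, map_zero]
  have hne : φ (coeff m0 c) ≠ 0 := by
    intro h
    apply hm0
    exact (map_eq_zero_iff _ (iterateFrobeniusEquiv κ p k).symm.injective).1 h
  intro x J θ r hr h
  have h1 := congrArg ρ h
  rw [mul_comm, hmul, map_sum, hρc] at h1
  have h2 : ∀ j, ρ (r j * θ j ^ q) = θ j * ρ (r j) := fun j => by rw [mul_comm, hmul]
  simp only [h2] at h1
  refine ⟨fun j => C (φ (coeff m0 c))⁻¹ * ρ (r j), fun j => (RM κ (coneMon Λ)).mul_mem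
    ((RM κ (coneMon Λ)).algebraMap_mem _) (hmem _ (hr j)), ?_⟩
  calc x = C (φ (coeff m0 c))⁻¹ * (x * C (φ (coeff m0 c))) := by
        rw [mul_comm x, ← mul_assoc, ← C_mul, inv_mul_cancel₀ hne, C_1, one_mul]
    _ = _ := by
        rw [h1, Finset.mul_sum]
        exact Finset.sum_congr rfl fun j _ => by ring

end ToricNewton


namespace ToricNewton

/-- Certificate that the `θ i` generate an ideal containing everything of large degree. -/
def Cert {τ κ : Type*} [Fintype τ] [CommRing κ] (M : AddSubmonoid (τ →₀ ℕ)) (t0 : τ)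
    (θ : τ → MvPolynomial τ κ) (z : τ →₀ ℕ) : Prop :=
  ∃ g : τ → MvPolynomial τ κ, (∀ i, g i ∈ RM κ M) ∧
    (∀ i a, coeff a (g i) ≠ 0 → a t0 < z t0) ∧ monomial z 1 = ∑ i, g i * θ i

lemma mono_trdeg {τ : Type*} [Fintype τ] {κ : Type*} [Field κ] (M : AddSubmonoid (τ →₀ ℕ))
    (hX : ∀ i, ∃ a ∈ M, a + Finsupp.single i 1 ∈ M)
    (θ : τ → MvPolynomial τ κ)
    (hZint : ∀ x ∈ RM κ M, IsIntegral (Algebra.adjoin κ (Set.range θ)) x) :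
    AlgebraicIndependent κ θ := by
  classical
  have hXalg : ∀ i, IsAlgebraic (Algebra.adjoin κ (Set.range θ)) (X i : MvPolynomial τ κ) := by
    intro i
    obtain ⟨a, ha, hai⟩ := hX i
    have h1 := (hZint _ (monomial_mem_RM ha (1:κ))).isAlgebraic
    have h2 := (hZint _ (monomial_mem_RM hai (1:κ))).isAlgebraic
    refine IsAlgebraic.of_mul (y := monomial a (1:κ)) ?_ h1 ?_
    · rw [mem_nonZeroDivisors_iff_ne_zero]; simp
    · have : monomial a (1:κ) * X i = monomial (a + Finsupp.single i 1) 1 := by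
        rw [X, monomial_mul, one_mul]
      rwa [this]
  have : Algebra.IsAlgebraic (Algebra.adjoin κ (Set.range θ)) (MvPolynomial τ κ) := by
    constructor
    intro x
    rw [← Subalgebra.mem_algebraicClosure]
    induction x using MvPolynomial.induction_on with
    | C a =>
      exact (Subalgebra.algebraicClosure _ _).algebraMap_mem
        (algebraMap κ (Algebra.adjoin κ (Set.range θ)) a)
    | add p q hp hq => exact Subalgebra.add_mem _ hp hq
    | mul_X p i hp => exact Subalgebra.mul_mem _ hp (hXalg i)
  refine (Algebra.IsAlgebraic.isTranscendenceBasis_of_lift_le_trdeg_of_finite κ θ ?_).1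
  rw [MvPolynomial.trdeg_of_isDomain]
  simp

theorem regular_charP {τ : Type*} [Fintype τ] {κ : Type*} [Field κ] (p : ℕ) [Fact p.Prime] [CharP κ p]
    [PerfectRing κ p] (Λ : Set (τ → ℤ)) (hΛ : Λ.Finite)
    (hX : ∀ i, ∃ a ∈ coneMon Λ, a + Finsupp.single i 1 ∈ coneMon Λ)
    (θ : τ → MvPolynomial τ κ) (hθ : ∀ i, θ i ∈ RM κ (coneMon Λ)) (t0 : τ) (N : ℕ)
    (hN : {b | b ∈ coneMon Λ ∧ b t0 < N}.Finite)
    (hcert : ∀ b ∈ coneMon Λ, N ≤ b t0 → Cert (coneMon Λ) t0 θ b)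
    (J : Finset τ) (i : τ) (hi : i ∉ J) (x : MvPolynomial τ κ) (hx : x ∈ RM κ (coneMon Λ))
    (r : τ → MvPolynomial τ κ) (hr : ∀ j, r j ∈ RM κ (coneMon Λ))
    (h : x * θ i = ∑ j ∈ J, r j * θ j) :
    ∃ r' : τ → MvPolynomial τ κ, (∀ j, r' j ∈ RM κ (coneMon Λ)) ∧ x = ∑ j ∈ J, r' j * θ j := by
  classical
  set M := coneMon Λ with hM
  let R := RM κ M
  let θ' : τ → R := fun i => ⟨θ i, hθ i⟩
  have hfin : (aeval θ' : MvPolynomial τ κ →ₐ[κ] R).toRingHom.Finite := by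
    let _ : Algebra (MvPolynomial τ κ) R := (aeval θ' : MvPolynomial τ κ →ₐ[κ] R).toRingHom.toAlgebra
    have hsm : ∀ (P : MvPolynomial τ κ) (y : R), P • y = aeval θ' P * y := fun P y => rfl
    change Module.Finite (MvPolynomial τ κ) R
    let mon : M → R := fun b => ⟨monomial b.1 1, monomial_mem_RM b.2 1⟩
    let G : Set R := mon '' {b : M | b.1 t0 < N}
    have hG : G.Finite := by
      refine Set.Finite.image _ ?_
      refine Set.Finite.of_finite_image (f := Subtype.val) (hN.subset ?_) Subtype.val_injective.injOn
      rintro _ ⟨b, hb, rfl⟩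
      exact ⟨b.2, hb⟩
    have key : ∀ s : ℕ, ∀ y : R, (∀ a, coeff a y.1 ≠ 0 → a t0 < s) →
        y ∈ Submodule.span (MvPolynomial τ κ) G := by
      intro s
      induction s with
      | zero =>
        intro y hy
        have : y = 0 := by
          ext a
          by_contra h
          exact absurd (hy a h) (by simp)
        rw [this]; exact Submodule.zero_mem _
      | succ s ih =>
        intro y hy
        have hmon : ∀ b : M, b.1 t0 < s + 1 → mon b ∈ Submodule.span (MvPolynomial τ κ) G := by
          intro b hb
          by_cases hbN : b.1 t0 < N
          · exact Submodule.subset_span ⟨b, hbN, rfl⟩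
          · obtain ⟨g, hg1, hg2, hg3⟩ := hcert b.1 b.2 (by lia)
            have : mon b = ∑ i, (X i : MvPolynomial τ κ) • (⟨g i, hg1 i⟩ : R) := by
              apply Subtype.ext
              simp only [hsm, aeval_X]
              rw [AddSubmonoidClass.coe_finsetSum]
              change monomial b.1 1 = ∑ i, θ i * g i
              rw [hg3]
              exact Finset.sum_congr rfl fun i _ => mul_comm _ _
            rw [this]
            refine Submodule.sum_mem _ fun i _ => Submodule.smul_mem _ _ (ih _ fun a ha => ?_)
            have := hg2 i a ha
            lia
        have hy2 : y = ∑ b ∈ y.1.support.attach,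
            (C (coeff b.1 y.1) : MvPolynomial τ κ) • mon ⟨b.1, y.2 _ (mem_support_iff.1 b.2)⟩ := by
          apply Subtype.ext
          rw [AddSubmonoidClass.coe_finsetSum]
          conv_lhs => rw [y.1.as_sum, ← Finset.sum_attach]
          refine Finset.sum_congr rfl fun b _ => ?_
          rw [hsm, ← algebraMap_eq, AlgHom.commutes]
          change _ = algebraMap κ (MvPolynomial τ κ) _ * monomial b.1 1
          rw [algebraMap_eq, C_mul_monomial, mul_one]
        rw [hy2]
        exact Submodule.sum_mem _ fun b _ => Submodule.smul_mem _ _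
          (hmon _ (hy _ (mem_support_iff.1 b.2)))
    refine ⟨hG.toFinset, ?_⟩
    rw [hG.coe_toFinset, eq_top_iff]
    intro y _
    refine key ((y.1.support.sup fun a => a t0) + 1) y fun a ha => ?_
    rw [Nat.lt_succ_iff]
    exact Finset.le_sup (f := fun a : τ →₀ ℕ => a t0) (mem_support_iff.2 ha)
  have hval : ∀ P : MvPolynomial τ κ, ((aeval θ' P : R) : MvPolynomial τ κ) = aeval θ P := by
    intro P
    have := (aeval_algebraMap_apply (MvPolynomial τ κ) θ' P).symm
    exact this
  have hind : AlgebraicIndependent κ θ := by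
    refine mono_trdeg M hX θ fun x hx => ?_
    have h1 := hfin.to_isIntegral ⟨x, hx⟩
    let φ : MvPolynomial τ κ →+* Algebra.adjoin κ (Set.range θ) :=
      ((aeval θ : MvPolynomial τ κ →ₐ[κ] MvPolynomial τ κ).codRestrict _ (fun P => by
        rw [Algebra.adjoin_range_eq_range_aeval]; exact ⟨P, rfl⟩)).toRingHom
    let _ : Algebra (MvPolynomial τ κ) R := (aeval θ' : MvPolynomial τ κ →ₐ[κ] R).toRingHom.toAlgebra
    have h2 : IsIntegral (MvPolynomial τ κ) (⟨x, hx⟩ : R) := h1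
    refine h2.map_of_comp_eq φ R.val.toRingHom ?_
    exact RingHom.ext fun P => (hval P).symm
  have hind' : AlgebraicIndependent κ θ' := by
    intro P Q hPQ
    apply hind
    change aeval θ P = aeval θ Q
    rw [← hval, ← hval]
    exact congrArg Subtype.val hPQ
  have : CharP R p := charP_of_injective_algebraMap (algebraMap κ R).injective p
  obtain ⟨c, hc0, hc⟩ := colon_capture p θ' hind' hfin
  obtain ⟨k, hk⟩ := split_argument (κ := κ) p Λ hΛ c.1 (fun h => hc0 (Subtype.ext h))
  obtain ⟨r', hr'⟩ := hc J i hi k ⟨x, hx⟩ (fun j => ⟨r j, hr j⟩) (by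
    apply Subtype.ext
    rw [AddSubmonoidClass.coe_finsetSum]
    exact h)
  refine hk x J θ (fun j => (r' j).1) (fun j => (r' j).2) ?_
  have := congrArg Subtype.val hr'
  rw [AddSubmonoidClass.coe_finsetSum] at this
  exact this

end ToricNewton


namespace ToricNewton

lemma jacobson_int : IsJacobsonRing ℤ := by
  rw [isJacobsonRing_iff_prime_eq]
  intro P hP
  by_cases h : P = ⊥
  · subst h
    rw [eq_bot_iff]
    intro x hx
    have h1 := Ideal.mem_jacobson_bot.1 hx x
    rw [Int.isUnit_iff] at h1
    have : x = 0 := by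
      rcases h1 with h1 | h1
      · have : x * x = 0 := by linarith
        simpa using this
      · nlinarith [mul_self_nonneg x]
    simpa using this
  · have : P.IsMaximal := hP.isMaximal h
    exact Ideal.jacobson_eq_self_of_isMaximal

lemma exists_reduction (T : Set ℂ) (hT : T.Finite) :
    ∃ (D : Subalgebra ℤ ℂ) (p : ℕ) (κ : Type) (_ : Field κ), T ⊆ D ∧ p.Prime ∧ CharP κ p ∧
      IsAlgClosed κ ∧ Nonempty (D →+* κ) := by
  let D := Algebra.adjoin ℤ T
  have hD : Algebra.FiniteType ℤ D := by
    have := Subalgebra.fg_adjoin_finset (R := ℤ) hT.toFinset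
    rw [hT.coe_toFinset] at this
    exact (Subalgebra.fg_iff_finiteType _).1 this
  obtain ⟨m, hm⟩ := Ideal.exists_maximal D
  let _ := Ideal.Quotient.field m
  have hfin : Module.Finite ℤ (D ⧸ m) := by
    have : Algebra.FiniteType ℤ (D ⧸ m) := inferInstance
    have := jacobson_int
    exact finite_of_finite_type_of_isJacobsonRing ℤ (D ⧸ m)
  obtain ⟨p, hp⟩ := CharP.exists (D ⧸ m)
  have hp0 : p ≠ 0 := by
    rintro rfl
    have : CharZero (D ⧸ m) := CharP.charP_to_charZero _
    have hZint : Algebra.IsIntegral ℤ (D ⧸ m) := inferInstance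
    have hinj : Function.Injective (algebraMap ℤ (D ⧸ m)) := by
      intro a b h; simpa using h
    have := isField_of_isIntegral_of_isField hinj (Field.toIsField (D ⧸ m))
    exact Int.not_isField this
  have hpp : p.Prime := (CharP.char_is_prime_or_zero (D ⧸ m) p).resolve_right hp0
  refine ⟨D, p, AlgebraicClosure (D ⧸ m), inferInstance, Algebra.subset_adjoin, hpp, ?_,
    inferInstance, ⟨(algebraMap (D ⧸ m) _).comp (Ideal.Quotient.mk m)⟩⟩
  exact charP_of_injective_algebraMap (algebraMap (D ⧸ m) (AlgebraicClosure (D ⧸ m))).injective p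

/-- The linear pairing with a finitely supported functional. -/
noncomputable def pairE {τ A : Type*} [CommRing A] (E : Finset (τ →₀ ℕ)) (l : (τ →₀ ℕ) → A) :
    MvPolynomial τ A →ₗ[A] A :=
  ∑ b ∈ E, (l b) • lcoeff A b

lemma pairE_apply {τ A : Type*} [CommRing A] (E : Finset (τ →₀ ℕ)) (l : (τ →₀ ℕ) → A)
    (P : MvPolynomial τ A) : pairE E l P = ∑ b ∈ E, l b * coeff b P := by
  simp [pairE, LinearMap.sum_apply]

lemma pairE_map {τ A B : Type*} [CommRing A] [CommRing B] (φ : A →+* B) (E : Finset (τ →₀ ℕ))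
    (l : (τ →₀ ℕ) → A) (P : MvPolynomial τ A) :
    pairE E (fun b => φ (l b)) (map φ P) = φ (pairE E l P) := by
  simp [pairE_apply, coeff_map]

lemma mul_sum_span {τ A : Type*} [CommRing A] (r θ : MvPolynomial τ A) :
    r * θ = ∑ b ∈ r.support, coeff b r • (monomial b 1 * θ) := by
  conv_lhs => rw [r.as_sum, Finset.sum_mul]
  refine Finset.sum_congr rfl fun b _ => ?_
  rw [← smul_mul_assoc, smul_monomial, smul_eq_mul, mul_one]

theorem regular_char0 {τ : Type*} [Fintype τ] (Λ : Set (τ → ℤ)) (hΛ : Λ.Finite)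
    (hX : ∀ i, ∃ a ∈ coneMon Λ, a + Finsupp.single i 1 ∈ coneMon Λ)
    (θ : τ → MvPolynomial τ ℂ) (hθ : ∀ i, θ i ∈ RM ℂ (coneMon Λ)) (t0 : τ)
    (d : τ → ℕ) (hd : ∀ i a, coeff a (θ i) ≠ 0 → a t0 = d i)
    (hfinM : ∀ N, {b | b ∈ coneMon Λ ∧ b t0 < N}.Finite)
    (Z : Finset (τ →₀ ℕ)) (hZc : ∀ z ∈ Z, Cert (coneMon Λ) t0 θ z)
    (N : ℕ) (hZ : ∀ b ∈ coneMon Λ, N ≤ b t0 → ∃ z ∈ Z, ∃ b' ∈ coneMon Λ, b = z + b')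
    (J : Finset τ) (i : τ) (hi : i ∉ J) (s : ℕ)
    (x : MvPolynomial τ ℂ) (hx : x ∈ RM ℂ (coneMon Λ)) (hxs : ∀ a, coeff a x ≠ 0 → a t0 = s)
    (r : τ → MvPolynomial τ ℂ) (hr : ∀ j, r j ∈ RM ℂ (coneMon Λ))
    (h : x * θ i = ∑ j ∈ J, r j * θ j) :
    ∃ r' : τ → MvPolynomial τ ℂ, (∀ j, r' j ∈ RM ℂ (coneMon Λ)) ∧ x = ∑ j ∈ J, r' j * θ j := by
  classical
  set M := coneMon Λ with hM
  let W : Submodule ℂ (MvPolynomial τ ℂ) :=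
    Submodule.span ℂ {y | ∃ b ∈ M, ∃ j ∈ J, y = monomial b 1 * θ j}
  suffices hxW : x ∈ W by
    refine Submodule.span_induction ?_ ?_ ?_ ?_ hxW
    · rintro y ⟨b, hb, j, hj, rfl⟩
      refine ⟨Pi.single j (monomial b 1), fun k => ?_, ?_⟩
      · by_cases hk : k = j
        · subst hk; simpa using monomial_mem_RM hb (1:ℂ)
        · rw [Pi.single_eq_of_ne hk]; exact (RM ℂ M).zero_mem
      · rw [Finset.sum_eq_single j]
        · simp
        · intro k _ hk; rw [Pi.single_eq_of_ne hk, zero_mul]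
        · intro h; exact absurd hj h
    · exact ⟨0, fun _ => (RM ℂ M).zero_mem, by simp⟩
    · rintro y z _ _ ⟨r1, h1, rfl⟩ ⟨r2, h2, rfl⟩
      exact ⟨r1 + r2, fun k => (RM ℂ M).add_mem (h1 k) (h2 k), by
        simp [add_mul, Finset.sum_add_distrib]⟩
    · rintro a y _ ⟨r1, h1, rfl⟩
      exact ⟨fun k => a • r1 k, fun k => (RM ℂ M).smul_mem (h1 k) a, by
        simp [Finset.smul_sum]⟩
  by_contra hxW
  obtain ⟨l0, hl0x, hl0W⟩ := Submodule.exists_le_ker_of_notMem hxW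
  have hEfin : {b | b ∈ M ∧ b t0 = s}.Finite :=
    (hfinM (s + 1)).subset fun b hb => ⟨hb.1, by rw [hb.2]; lia⟩
  let E : Finset (τ →₀ ℕ) := hEfin.toFinset
  have hE : ∀ b, b ∈ E ↔ b ∈ M ∧ b t0 = s := fun b => by simp [E]
  let l : (τ →₀ ℕ) → ℂ := fun b => if b ∈ E then l0 (monomial b 1) else 0
  -- pairing with homogeneous elements
  have hpair : ∀ P : MvPolynomial τ ℂ, P ∈ RM ℂ M → (∀ a, coeff a P ≠ 0 → a t0 = s) →
      pairE E l P = l0 P := by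
    intro P hP hPs
    have hsub : P.support ⊆ E := fun a ha =>
      (hE a).2 ⟨hP a (mem_support_iff.1 ha), hPs a (mem_support_iff.1 ha)⟩
    conv_rhs => rw [P.as_sum, map_sum]
    rw [pairE_apply, ← Finset.sum_subset hsub]
    · refine Finset.sum_congr rfl fun b hb => ?_
      simp only [l, if_pos (hsub hb)]
      rw [← mul_one (coeff b P), ← smul_eq_mul (coeff b P) (1:ℂ), ← smul_monomial, map_smul]
      simp [mul_comm]
    · intro b _ hb
      rw [notMem_support_iff.1 hb, mul_zero]
  have hlz : ∀ b ∈ M, ∀ j ∈ J, pairE E l (monomial b 1 * θ j) = 0 := by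
    intro b hb j hj
    have hcoef : ∀ a, coeff a (monomial b 1 * θ j) ≠ 0 → a t0 = b t0 + d j := by
      intro a ha
      rw [coeff_monomial_mul'] at ha
      split_ifs at ha with hba
      · rw [one_mul] at ha
        have h1 := hd j _ ha
        have h2 := hba t0
        rw [Finsupp.tsub_apply] at h1
        lia
      · exact absurd rfl ha
    by_cases hs : b t0 + d j = s
    · rw [hpair _ ((RM ℂ M).mul_mem (monomial_mem_RM hb 1) (hθ j))
        (fun a ha => (hcoef a ha).trans hs)]
      exact hl0W (Submodule.subset_span ⟨b, hb, j, hj, rfl⟩)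
    · rw [pairE_apply]
      refine Finset.sum_eq_zero fun a ha => ?_
      have : coeff a (monomial b 1 * θ j) = 0 := by
        by_contra hne
        exact hs (by rw [← hcoef a hne, ((hE a).1 ha).2])
      rw [this, mul_zero]
  choose! g hg1 hg2 hg3 using hZc
  -- the finite set of polynomials and the ring of coefficients
  let PP : Set (MvPolynomial τ ℂ) := Set.range θ ∪ (⋃ z ∈ Z, Set.range (g z)) ∪ {x} ∪ Set.range r
  have hPP : PP.Finite := by
    refine Set.Finite.union (Set.Finite.union (Set.Finite.union (Set.finite_range _) ?_)
      (Set.finite_singleton _)) (Set.finite_range _)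
    exact Set.Finite.biUnion Z.finite_toSet fun z _ => Set.finite_range _
  let T : Set ℂ := (⋃ P ∈ PP, (P.coeffs : Set ℂ)) ∪ (l '' (E : Set (τ →₀ ℕ))) ∪ {(l0 x)⁻¹}
  have hT : T.Finite := by
    refine Set.Finite.union (Set.Finite.union ?_ (E.finite_toSet.image _)) (Set.finite_singleton _)
    exact hPP.biUnion fun P _ => P.coeffs.finite_toSet
  obtain ⟨D, p, κ, _, hTD, hp, hchar, halg, ⟨χ⟩⟩ := exists_reduction T hT
  have : Fact p.Prime := ⟨hp⟩
  let ι : D →+* ℂ := algebraMap D ℂ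
  have hι : Function.Injective ι := Subtype.val_injective
  have hlift : ∀ P ∈ PP, ∃ P' : MvPolynomial τ D, map ι P' = P := by
    intro P hP
    have : P ∈ Set.range (map ι : MvPolynomial τ D →+* MvPolynomial τ ℂ) := by
      rw [mem_range_map_iff_coeffs_subset]
      intro c hc
      have : c ∈ D := hTD (Or.inl (Or.inl (Set.mem_biUnion hP hc)))
      exact ⟨⟨c, this⟩, rfl⟩
    exact this
  choose! L hL using hlift
  have hRM : ∀ P ∈ PP, P ∈ RM ℂ M → map χ (L P) ∈ RM κ M := by
    intro P hP hPM a ha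
    apply hPM
    rw [coeff_map] at ha
    rw [← hL P hP, coeff_map]
    intro h0
    apply ha
    rw [hι (h0.trans (map_zero ι).symm), map_zero]
  have hθPP : ∀ j, θ j ∈ PP := fun j => Or.inl (Or.inl (Or.inl ⟨j, rfl⟩))
  have hgPP : ∀ z ∈ Z, ∀ j, g z j ∈ PP := fun z hz j =>
    Or.inl (Or.inl (Or.inr (Set.mem_biUnion hz ⟨j, rfl⟩)))
  have hxPP : x ∈ PP := Or.inl (Or.inr rfl)
  have hrPP : ∀ j, r j ∈ PP := fun j => Or.inr ⟨j, rfl⟩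
  have hmapinj : Function.Injective (map ι : MvPolynomial τ D → MvPolynomial τ ℂ) :=
    map_injective _ hι
  let θκ : τ → MvPolynomial τ κ := fun j => map χ (L (θ j))
  have hcertZ : ∀ z ∈ Z, Cert M t0 θκ z := by
    intro z hz
    refine ⟨fun j => map χ (L (g z j)), fun j => hRM _ (hgPP z hz j) (hg1 z hz j), ?_, ?_⟩
    · intro j a ha
      apply hg2 z hz j a
      rw [coeff_map] at ha
      rw [← hL _ (hgPP z hz j), coeff_map]
      intro h0
      apply ha
      rw [hι (h0.trans (map_zero ι).symm), map_zero]
    · have hDz : (monomial z 1 : MvPolynomial τ D) = ∑ j, L (g z j) * L (θ j) := by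
        apply hmapinj
        rw [map_sum]
        simp only [map_mul, hL _ (hθPP _), hL _ (hgPP z hz _), map_monomial, map_one]
        exact hg3 z hz
      have := congrArg (map χ) hDz
      simpa only [map_sum, map_mul, map_monomial, map_one] using this
  have hcert : ∀ b ∈ M, N ≤ b t0 → Cert M t0 θκ b := by
    intro b hb hbN
    obtain ⟨z, hz, b', hb', rfl⟩ := hZ b hb hbN
    obtain ⟨g', h1, h2, h3⟩ := hcertZ z hz
    refine ⟨fun j => monomial b' 1 * g' j, fun j => (RM κ M).mul_mem (monomial_mem_RM hb' 1) (h1 j),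
      ?_, ?_⟩
    · intro j a ha
      rw [coeff_monomial_mul'] at ha
      split_ifs at ha with hba
      · rw [one_mul] at ha
        have h4 := h2 j _ ha
        have h5 := hba t0
        rw [Finsupp.tsub_apply] at h4
        rw [Finsupp.add_apply]
        lia
      · exact absurd rfl ha
    · have : monomial (z + b') (1:κ) = monomial b' 1 * monomial z 1 := by
        rw [monomial_mul, one_mul, add_comm]
      rw [this, h3, Finset.mul_sum]
      exact Finset.sum_congr rfl fun j _ => by ring
  have heq : map χ (L x) * θκ i = ∑ j ∈ J, map χ (L (r j)) * θκ j := by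
    have hDx : L x * L (θ i) = ∑ j ∈ J, L (r j) * L (θ j) := by
      apply hmapinj
      rw [map_sum]
      simp only [map_mul, hL _ (hθPP _), hL _ (hrPP _), hL _ hxPP]
      exact h
    have := congrArg (map χ) hDx
    simpa only [map_sum, map_mul] using this
  obtain ⟨r', hr'1, hr'2⟩ := regular_charP p Λ hΛ hX θκ (fun j => hRM _ (hθPP j) (hθ j)) t0 N
    (hfinM N) hcert J i hi (map χ (L x)) (hRM _ hxPP hx) (fun j => map χ (L (r j)))
    (fun j => hRM _ (hrPP j) (hr j)) heq
  -- the reduced functional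
  have hlD : ∀ b, l b ∈ D := by
    intro b
    by_cases hb : b ∈ E
    · exact hTD (Or.inl (Or.inr ⟨b, hb, rfl⟩))
    · simp only [l, if_neg hb]; exact D.zero_mem
  let lD : (τ →₀ ℕ) → D := fun b => ⟨l b, hlD b⟩
  have hι_l : (fun b => ι (lD b)) = l := rfl
  have hzero : ∀ b ∈ M, ∀ j ∈ J, pairE E (fun b => χ (lD b)) (monomial b 1 * θκ j) = 0 := by
    intro b hb j hj
    have h1 : monomial b (1:κ) * θκ j = map χ (monomial b 1 * L (θ j)) := by
      rw [map_mul, map_monomial, map_one χ]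
    rw [h1, pairE_map]
    have h2 : pairE E lD (monomial b 1 * L (θ j)) = 0 := by
      apply hι
      rw [← pairE_map, hι_l, map_mul, map_monomial, map_one ι, hL _ (hθPP j), hlz b hb j hj, map_zero]
    rw [h2, map_zero]
  have hxz : pairE E (fun b => χ (lD b)) (map χ (L x)) = 0 := by
    rw [hr'2, map_sum]
    refine Finset.sum_eq_zero fun j hj => ?_
    rw [mul_sum_span, map_sum]
    refine Finset.sum_eq_zero fun b hb => ?_
    rw [map_smul, hzero b (hr'1 j b (mem_support_iff.1 hb)) j hj, smul_zero]
  rw [pairE_map] at hxz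
  have hinv : (l0 x)⁻¹ ∈ D := hTD (Or.inr rfl)
  have h1 : pairE E lD (L x) * ⟨_, hinv⟩ = 1 := by
    apply hι
    rw [map_mul, ← pairE_map, hι_l, hL _ hxPP, hpair x hx hxs, map_one]
    exact mul_inv_cancel₀ hl0x
  have h2 := congrArg χ h1
  rw [map_mul, hxz, zero_mul, map_one] at h2
  exact zero_ne_one h2

end ToricNewton


namespace ToricNewton

section
set_option linter.unusedSectionVars false
open scoped Pointwise
variable {σ : Type*} [Fintype σ] [DecidableEq σ]

/-- Spanning condition on the set of tight points. -/
def Tight (S : Finset (σ → ℝ)) (l : σ → ℝ) : Prop :=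
  ∀ w : σ → ℝ, (∀ v ∈ S, l ⬝ᵥ v = 1 → w ⬝ᵥ v = 0) → w = 0

/-- Vertices of the dual polyhedron. -/
def dualVert (S : Finset (σ → ℝ)) : Set (σ → ℝ) :=
  {l | (∀ v ∈ S, l ⬝ᵥ v ≤ 1) ∧ Tight S l}

lemma move_step (S : Finset (σ → ℝ)) (x l w : σ → ℝ) (hl : ∀ v ∈ S, l ⬝ᵥ v ≤ 1)
    (hw : ∀ v ∈ S, l ⬝ᵥ v = 1 → w ⬝ᵥ v = 0) (hwx : 0 ≤ w ⬝ᵥ x) (hpos : ∃ v ∈ S, 0 < w ⬝ᵥ v) :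
    ∃ l', (∀ v ∈ S, l' ⬝ᵥ v ≤ 1) ∧ l ⬝ᵥ x ≤ l' ⬝ᵥ x ∧
      (S.filter fun v => l' ⬝ᵥ v ≠ 1).card < (S.filter fun v => l ⬝ᵥ v ≠ 1).card := by
  classical
  have hne : (S.filter fun v => 0 < w ⬝ᵥ v).Nonempty := by
    obtain ⟨v, hv, h⟩ := hpos
    exact ⟨v, Finset.mem_filter.2 ⟨hv, h⟩⟩
  obtain ⟨v0, hv0, hmin⟩ := Finset.exists_min_image _ (fun v => (1 - l ⬝ᵥ v) / (w ⬝ᵥ v)) hne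
  rw [Finset.mem_filter] at hv0
  set τ := (1 - l ⬝ᵥ v0) / (w ⬝ᵥ v0) with hτ
  have hτ0 : 0 ≤ τ := div_nonneg (by linarith [hl v0 hv0.1]) hv0.2.le
  refine ⟨l + τ • w, ?_, ?_, ?_⟩
  · intro v hv
    rw [add_dotProduct, smul_dotProduct, smul_eq_mul]
    by_cases h : 0 < w ⬝ᵥ v
    · have := hmin v (Finset.mem_filter.2 ⟨hv, h⟩)
      rw [le_div_iff₀ h] at this
      linarith
    · have : τ * (w ⬝ᵥ v) ≤ 0 := mul_nonpos_of_nonneg_of_nonpos hτ0 (not_lt.1 h)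
      linarith [hl v hv]
  · rw [add_dotProduct, smul_dotProduct, smul_eq_mul]
    linarith [mul_nonneg hτ0 hwx]
  · apply Finset.card_lt_card
    rw [Finset.ssubset_iff_of_subset]
    · refine ⟨v0, Finset.mem_filter.2 ⟨hv0.1, fun h => ?_⟩, fun h => ?_⟩
      · exact hv0.2.ne' (hw v0 hv0.1 h)
      · apply (Finset.mem_filter.1 h).2
        rw [add_dotProduct, smul_dotProduct, smul_eq_mul, hτ, div_mul_cancel₀ _ hv0.2.ne']
        ring
    · intro v hv
      rw [Finset.mem_filter] at hv ⊢
      refine ⟨hv.1, fun h => hv.2 ?_⟩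
      rw [add_dotProduct, smul_dotProduct, hw v hv.1 h, h]
      simp

lemma exists_vert (S : Finset (σ → ℝ)) (hS : ∀ i, ∃ k : ℝ, 0 < k ∧ Pi.single i k ∈ S)
    (x : σ → ℝ) (hx : ∀ i, 0 ≤ x i) : ∀ (c : ℕ) (l : σ → ℝ), (∀ v ∈ S, l ⬝ᵥ v ≤ 1) →
      (S.filter fun v => l ⬝ᵥ v ≠ 1).card = c → ∃ l' ∈ dualVert S, l ⬝ᵥ x ≤ l' ⬝ᵥ x := by
  intro c
  induction c using Nat.strong_induction_on with
  | _ c ih =>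
    intro l hl hc
    by_cases ht : Tight S l
    · exact ⟨l, ⟨hl, ht⟩, le_rfl⟩
    · have key : ∃ w : σ → ℝ, (∀ v ∈ S, l ⬝ᵥ v = 1 → w ⬝ᵥ v = 0) ∧ 0 ≤ w ⬝ᵥ x ∧
          ∃ v ∈ S, 0 < w ⬝ᵥ v := by
        have : ∃ w : σ → ℝ, (∀ v ∈ S, l ⬝ᵥ v = 1 → w ⬝ᵥ v = 0) ∧ w ≠ 0 ∧ 0 ≤ w ⬝ᵥ x := by
          unfold Tight at ht
          push Not at ht
          obtain ⟨w, hw, hw0⟩ := ht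
          by_cases h : 0 ≤ w ⬝ᵥ x
          · exact ⟨w, hw, hw0, h⟩
          · refine ⟨-w, fun v hv h1 => ?_, neg_ne_zero.2 hw0, ?_⟩
            · rw [neg_dotProduct, hw v hv h1, neg_zero]
            · rw [neg_dotProduct]; linarith
        obtain ⟨w, hw, hw0, hwx⟩ := this
        by_cases h : ∃ v ∈ S, 0 < w ⬝ᵥ v
        · exact ⟨w, hw, hwx, h⟩
        · push Not at h
          have hwneg : ∀ i, w i ≤ 0 := by
            intro i
            obtain ⟨k, hk, hkS⟩ := hS i
            have := h _ hkS
            rw [dotProduct_single] at this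
            by_contra hc
            exact absurd this (not_le.2 (mul_pos (not_le.1 hc) hk))
          have hwx' : w ⬝ᵥ x ≤ 0 :=
            Finset.sum_nonpos fun i _ => mul_nonpos_of_nonpos_of_nonneg (hwneg i) (hx i)
          refine ⟨-w, fun v hv h1 => by rw [neg_dotProduct, hw v hv h1, neg_zero], by
            rw [neg_dotProduct]; linarith, ?_⟩
          obtain ⟨i, hi⟩ := Function.ne_iff.1 hw0
          obtain ⟨k, hk, hkS⟩ := hS i
          refine ⟨_, hkS, ?_⟩
          rw [dotProduct_single, Pi.neg_apply]
          have : w i < 0 := lt_of_le_of_ne (hwneg i) hi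
          exact mul_pos (by linarith) hk
      obtain ⟨w, hw, hwx, hpos⟩ := key
      obtain ⟨l1, h1, h2, h3⟩ := move_step S x l w hl hw hwx hpos
      obtain ⟨l', h4, h5⟩ := ih _ (hc ▸ h3) l1 h1 rfl
      exact ⟨l', h4, h2.trans h5⟩

lemma dualVert_finite (S : Finset (σ → ℝ)) : (dualVert S).Finite := by
  classical
  refine Set.Finite.of_injOn (f := fun l => S.filter fun v => l ⬝ᵥ v = 1)
    (t := (S.powerset : Set (Finset (σ → ℝ)))) ?_ ?_ (Finset.finite_toSet _)
  · intro l _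
    exact Finset.mem_coe.2 (Finset.mem_powerset.2 (Finset.filter_subset _ _))
  · intro l hl l' _ h
    rw [← sub_eq_zero]
    apply hl.2
    intro v hv h1
    have : v ∈ S.filter fun v => l' ⬝ᵥ v = 1 := by
      have h2 : v ∈ S.filter fun v => l ⬝ᵥ v = 1 := Finset.mem_filter.2 ⟨hv, h1⟩
      have h' : (S.filter fun v => l ⬝ᵥ v = 1) = S.filter fun v => l' ⬝ᵥ v = 1 := h
      rwa [h'] at h2
    rw [sub_dotProduct, h1, (Finset.mem_filter.1 this).2, sub_self]

lemma dualVert_rat (S : Finset (σ → ℝ)) (hS : ∀ v ∈ S, ∃ m : σ → ℕ, v = natToR m) (l : σ → ℝ)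
    (hl : l ∈ dualVert S) : ∃ q : σ → ℚ, ∀ i, l i = q i := by
  obtain ⟨r, hr⟩ := LinearMap.exists_leftInverse_of_injective (Algebra.linearMap ℚ ℝ)
    (LinearMap.ker_eq_bot.2 (algebraMap ℚ ℝ).injective)
  have hr1 : r 1 = 1 := by
    have := LinearMap.congr_fun hr 1
    simpa using this
  refine ⟨fun i => r (l i), fun i => ?_⟩
  have : l - (fun i => ((r (l i) : ℚ) : ℝ)) = 0 := by
    apply hl.2
    intro v hv h1
    obtain ⟨m, rfl⟩ := hS v hv
    rw [sub_dotProduct, h1, sub_eq_zero]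
    have h2 : r (l ⬝ᵥ natToR m) = 1 := by rw [h1, hr1]
    have h3 : l ⬝ᵥ natToR m = ∑ i, (m i : ℚ) • l i := by
      simp only [dotProduct, natToR]
      refine Finset.sum_congr rfl fun i _ => ?_
      rw [Rat.smul_def]; push_cast; ring
    rw [h3, map_sum] at h2
    simp only [map_smul, smul_eq_mul] at h2
    simp only [dotProduct, natToR]
    have h4 := congrArg (fun q : ℚ => (q : ℝ)) h2
    simp only [Rat.cast_one] at h4
    rw [← h4]
    push_cast
    exact Finset.sum_congr rfl fun i _ => by ring
  have := congrFun this i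
  simp only [Pi.sub_apply, Pi.zero_apply] at this
  linarith

lemma mem_smul_hull (S : Finset (σ → ℝ)) (hS : ∀ i, ∃ k : ℝ, 0 < k ∧ Pi.single i k ∈ S)
    (x : σ → ℝ) (hx : ∀ i, 0 ≤ x i) (c : ℝ) (hc : 0 < c)
    (h : ∀ l ∈ dualVert S, l ⬝ᵥ x ≤ c) : x ∈ c • convexHull ℝ ({0} ∪ (S : Set (σ → ℝ))) := by
  rw [Set.mem_smul_set_iff_inv_smul_mem₀ hc.ne']
  by_contra hnot
  have hfin : ({0} ∪ (S : Set (σ → ℝ))).Finite := (Set.finite_singleton _).union S.finite_toSet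
  obtain ⟨φ, u, h1, h2⟩ := geometric_hahn_banach_closed_point (convex_convexHull ℝ _)
    (hfin.isCompact_convexHull ℝ).isClosed hnot
  have hu : 0 < u := by
    have := h1 0 (subset_convexHull ℝ _ (Or.inl rfl))
    simpa using this
  let l : σ → ℝ := fun i => u⁻¹ * φ (Pi.single i 1)
  have hl : ∀ y, l ⬝ᵥ y = u⁻¹ * φ y := by
    intro y
    have hy : φ y = ∑ i, y i * φ (Pi.single i 1) := by
      conv_lhs => rw [pi_eq_sum_univ' y, map_sum]
      refine Finset.sum_congr rfl fun i _ => ?_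
      rw [map_smul, smul_eq_mul]
    rw [hy, Finset.mul_sum]
    exact Finset.sum_congr rfl fun i _ => by simp only [l]; ring
  obtain ⟨l', hl', hle⟩ := exists_vert S hS x hx _ l (fun v hv => by
    rw [hl, inv_mul_le_iff₀ hu, mul_one]
    exact (h1 v (subset_convexHull ℝ _ (Or.inr hv))).le) rfl
  have h3 := h l' hl'
  rw [map_smul, smul_eq_mul, lt_inv_mul_iff₀ hc] at h2
  rw [hl] at hle
  have h4 : c < u⁻¹ * φ x := by
    rw [lt_inv_mul_iff₀ hu]; linarith
  linarith


lemma mem_smul_hull_weights (S : Finset (σ → ℝ)) (x : σ → ℝ) (c : ℝ) (hc : 0 < c)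
    (h : x ∈ c • convexHull ℝ ({0} ∪ (S : Set (σ → ℝ)))) :
    ∃ w : (σ → ℝ) → ℝ, (∀ v, 0 ≤ w v) ∧ ∑ v ∈ S, w v ≤ c ∧ x = ∑ v ∈ S, w v • v := by
  classical
  obtain ⟨y, hy, rfl⟩ := h
  have : ({0} ∪ (S : Set (σ → ℝ))) = ((insert 0 S : Finset (σ → ℝ)) : Set (σ → ℝ)) := by
    rw [Finset.coe_insert, Set.singleton_union]
  rw [this, Finset.mem_convexHull'] at hy
  obtain ⟨w, h0, h1, rfl⟩ := hy
  have hsub : S ⊆ insert 0 S := Finset.subset_insert _ _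
  refine ⟨fun v => c * max (w v) 0, fun v => mul_nonneg hc.le (le_max_right _ _), ?_, ?_⟩
  · rw [← Finset.mul_sum]
    have h2 : ∑ v ∈ S, max (w v) 0 ≤ 1 := by
      rw [← h1]
      calc ∑ v ∈ S, max (w v) 0 = ∑ v ∈ S, w v :=
            Finset.sum_congr rfl fun v hv => max_eq_left (h0 v (hsub hv))
        _ ≤ _ := Finset.sum_le_sum_of_subset_of_nonneg hsub fun v hv _ => h0 v hv
    nlinarith
  · have : ∑ v ∈ insert 0 S, w v • v = ∑ v ∈ S, w v • v := by
      symm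
      apply Finset.sum_subset hsub
      intro v hv hvS
      rcases Finset.mem_insert.1 hv with rfl | h
      · simp
      · exact absurd h hvS
    simp only [this, Finset.smul_sum]
    refine Finset.sum_congr rfl fun v hv => ?_
    rw [max_eq_left (h0 v (hsub hv)), smul_smul]

/-- The combinatorial data attached to the gauge. -/
lemma gauge_data (S : Finset (σ → ℝ)) (hS : ∀ i, ∃ k : ℝ, 0 < k ∧ Pi.single i k ∈ S)
    (hS0 : ∀ v ∈ S, ∀ i, 0 ≤ v i) (x : σ → ℝ) (hx : ∀ i, 0 ≤ x i) :
    (∀ l, (∀ v ∈ S, l ⬝ᵥ v ≤ 1) → l ⬝ᵥ x ≤ gauge (convexHull ℝ ({0} ∪ (S : Set (σ → ℝ)))) x) ∧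
    (∃ l ∈ dualVert S, l ⬝ᵥ x = gauge (convexHull ℝ ({0} ∪ (S : Set (σ → ℝ)))) x) ∧
    (∃ w : (σ → ℝ) → ℝ, (∀ v, 0 ≤ w v) ∧
      ∑ v ∈ S, w v ≤ gauge (convexHull ℝ ({0} ∪ (S : Set (σ → ℝ)))) x ∧
      x = ∑ v ∈ S, w v • v) := by
  classical
  set P := convexHull ℝ ({0} ∪ (S : Set (σ → ℝ))) with hP
  -- an attaining vertex
  have hQ0 : ∀ v ∈ S, (0 : σ → ℝ) ⬝ᵥ v ≤ 1 := fun v _ => by simp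
  obtain ⟨l00, hl00, hl00'⟩ := exists_vert S hS x hx _ 0 hQ0 rfl
  rw [zero_dotProduct] at hl00'
  obtain ⟨l0, hl0, hmax⟩ := Set.exists_max_image (dualVert S) (fun l => l ⬝ᵥ x)
    (dualVert_finite S) ⟨l00, hl00⟩
  have hc0 : 0 ≤ l0 ⬝ᵥ x := hl00'.trans (hmax _ hl00)
  have hle : ∀ l, (∀ v ∈ S, l ⬝ᵥ v ≤ 1) → l ⬝ᵥ x ≤ gauge P x := by
    intro l hl
    apply le_csInf
    · refine ⟨l0 ⬝ᵥ x + 1, by show 0 < _; linarith, ?_⟩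
      exact mem_smul_hull S hS x hx _ (by linarith) fun l hl => (hmax l hl).trans (by linarith)
    · rintro r ⟨hr, y, hy, rfl⟩
      have hconv : P ⊆ {y | l ⬝ᵥ y ≤ 1} := by
        apply convexHull_min
        · rintro v (rfl | hv)
          · simp
          · exact hl v hv
        · have : {y | l ⬝ᵥ y ≤ 1} = {y | (dotProductBilin ℝ ℝ l) y ≤ 1} := rfl
          rw [this]
          exact convex_halfSpace_le (LinearMap.isLinear _) 1
      have := hconv hy
      simp only [Set.mem_ofPred_eq] at this
      simp only [dotProduct_smul, smul_eq_mul]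
      nlinarith [hr]
  -- a bounding functional
  have hsum : l0 ⬝ᵥ x = 0 → x = 0 := by
    intro h0
    let C : ℝ := 1 + ∑ v ∈ S, ∑ i, v i
    have hCpos : 0 < C := by
      have : 0 ≤ ∑ v ∈ S, ∑ i, v i :=
        Finset.sum_nonneg fun v hv => Finset.sum_nonneg fun i _ => hS0 v hv i
      simp only [C]; linarith
    have hl : ∀ v ∈ S, (fun _ => C⁻¹ : σ → ℝ) ⬝ᵥ v ≤ 1 := by
      intro v hv
      simp only [dotProduct]
      rw [← Finset.mul_sum, inv_mul_le_iff₀ hCpos, mul_one]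
      have := Finset.single_le_sum (f := fun v : σ → ℝ => ∑ i, v i)
        (fun v hv => Finset.sum_nonneg fun i _ => hS0 v hv i) hv
      simp only [C]
      linarith
    obtain ⟨l', hl', hle'⟩ := exists_vert S hS x hx _ _ hl rfl
    have h1 := hle'.trans (hmax _ hl')
    simp only [h0] at h1
    simp only [dotProduct] at h1
    rw [← Finset.mul_sum, inv_mul_le_iff₀ hCpos, mul_zero] at h1
    have h2 := le_antisymm h1 (Finset.sum_nonneg fun i _ => hx i)
    ext i
    exact (Finset.sum_eq_zero_iff_of_nonneg fun i _ => hx i).1 h2 i (Finset.mem_univ _)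
  have hge : gauge P x ≤ l0 ⬝ᵥ x := by
    rcases hc0.eq_or_lt with h | h
    · rw [hsum h.symm, gauge_zero]; simp
    · exact gauge_le_of_mem h.le (mem_smul_hull S hS x hx _ h hmax)
  have heq : l0 ⬝ᵥ x = gauge P x := le_antisymm (hle l0 hl0.1) hge
  refine ⟨hle, ⟨l0, hl0, heq⟩, ?_⟩
  rw [← heq]
  rcases hc0.eq_or_lt with h | h
  · exact ⟨0, fun _ => le_rfl, by simp [← h], by simp [hsum h.symm]⟩
  · exact mem_smul_hull_weights S x _ h (mem_smul_hull S hS x hx _ h hmax)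

end

end ToricNewton


namespace ToricNewton

section
set_option linter.unusedSectionVars false
variable {σ : Type*} [Fintype σ] [DecidableEq σ]

/-- Integral combinatorial data of the Newton function. -/
structure NData (f : MvPolynomial σ ℂ) where
  e : ℕ
  he : 1 ≤ e
  Λ : Finset (σ → ℤ)
  N : (σ →₀ ℕ) → ℕ
  N_eq : ∀ m, (N m : ℝ) = e * nu f (toR m)
  le_N : ∀ m, ∀ l ∈ Λ, ∑ i, l i * (m i : ℤ) ≤ N m
  att : ∀ m, ∃ l ∈ Λ, ∑ i, l i * (m i : ℤ) = N m
  Nsupp : ∀ v ∈ f.support, N v ≤ e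
  wt : ∀ m : σ →₀ ℕ, ∃ w : (σ →₀ ℕ) → ℝ, (∀ v, 0 ≤ w v) ∧
    (∀ i, (m i : ℝ) = ∑ v ∈ f.support, w v * (v i : ℝ)) ∧
    (e : ℝ) * ∑ v ∈ f.support, w v = N m ∧ ∀ v ∈ f.support, w v ≠ 0 → N v = e
  fin : ∀ c, {m | N m ≤ c}.Finite

lemma common_denom (T : Set ℝ) (hT : T.Finite) (h : ∀ t ∈ T, ∃ q : ℚ, t = q) :
    ∃ e : ℕ, 1 ≤ e ∧ ∀ t ∈ T, ∃ z : ℤ, (e : ℝ) * t = z := by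
  induction T, hT using Set.Finite.induction_on with
  | empty => exact ⟨1, le_rfl, by simp⟩
  | @insert a s ha hs ih =>
    obtain ⟨e, he, h1⟩ := ih fun t ht => h t (Set.mem_insert_of_mem _ ht)
    obtain ⟨q, hq⟩ := h a (Set.mem_insert _ _)
    refine ⟨q.den * e, Nat.mul_pos q.den_pos he, ?_⟩
    rintro t (rfl | ht)
    · refine ⟨e * q.num, ?_⟩
      rw [hq]
      have : (q.den : ℝ) * (q : ℝ) = q.num := by
        have := Rat.den_mul_eq_num q
        exact_mod_cast this
      push_cast
      linear_combination (e : ℝ) * this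
    · obtain ⟨z, hz⟩ := h1 t ht
      refine ⟨q.den * z, ?_⟩
      push_cast
      rw [← hz]; ring

theorem exists_NData (f : MvPolynomial σ ℂ) (hf : Convenient f) : Nonempty (NData f) := by
  classical
  let S : Finset (σ → ℝ) := f.support.image toR
  have hP : newtonPolytope f = convexHull ℝ ({0} ∪ (S : Set (σ → ℝ))) := by
    simp [newtonPolytope, S]
  have hinj : Function.Injective (toR : (σ →₀ ℕ) → (σ → ℝ)) := by
    intro a b h
    ext i
    have := congrFun h i
    simpa [toR] using this
  have hS : ∀ i, ∃ k : ℝ, 0 < k ∧ Pi.single i k ∈ S := by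
    intro i
    obtain ⟨k, hk, hc⟩ := hf i
    refine ⟨k, by exact_mod_cast hk, Finset.mem_image.2 ⟨_, mem_support_iff.2 hc, ?_⟩⟩
    ext j
    simp only [toR, Finsupp.single_apply, Pi.single_apply]
    by_cases h : i = j
    · simp [h]
    · simp [h, Ne.symm h]
  have hS0 : ∀ v ∈ S, ∀ i, 0 ≤ v i := by
    intro v hv i
    obtain ⟨m, _, rfl⟩ := Finset.mem_image.1 hv
    exact Nat.cast_nonneg _
  have hSn : ∀ v ∈ S, ∃ m : σ → ℕ, v = natToR m := by
    intro v hv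
    obtain ⟨m, _, rfl⟩ := Finset.mem_image.1 hv
    exact ⟨m, rfl⟩
  have hfin := dualVert_finite S
  obtain ⟨e, he, hz⟩ := common_denom (⋃ l ∈ dualVert S, Set.range l)
    (hfin.biUnion fun l _ => Set.finite_range l) (by
      intro t ht
      obtain ⟨l, hl, i, rfl⟩ := Set.mem_iUnion₂.1 ht
      obtain ⟨q, hq⟩ := dualVert_rat S hSn l hl
      exact ⟨q i, hq i⟩)
  have he0 : (0 : ℝ) < e := by exact_mod_cast he
  have hz' : ∀ l ∈ dualVert S, ∀ i, ((⌊(e : ℝ) * l i⌋ : ℤ) : ℝ) = e * l i := by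
    intro l hl i
    obtain ⟨z, hz1⟩ := hz (l i) (Set.mem_biUnion hl ⟨i, rfl⟩)
    rw [hz1, Int.floor_intCast]
  have hdot : ∀ l ∈ dualVert S, ∀ m : σ →₀ ℕ,
      ((∑ i, ⌊(e : ℝ) * l i⌋ * (m i : ℤ) : ℤ) : ℝ) = e * (l ⬝ᵥ toR m) := by
    intro l hl m
    push_cast
    simp only [dotProduct, toR, Finset.mul_sum, hz' l hl]
    exact Finset.sum_congr rfl fun i _ => by ring
  have hm0 : ∀ m : σ →₀ ℕ, ∀ i, 0 ≤ toR m i := fun m i => Nat.cast_nonneg _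
  have data := fun m : σ →₀ ℕ => gauge_data S hS hS0 (toR m) (hm0 m)
  simp only [← hP] at data
  have hN : ∀ m : σ →₀ ℕ, ∃ N : ℕ, (N : ℝ) = e * nu f (toR m) := by
    intro m
    obtain ⟨-, ⟨l, hl, h1⟩, -⟩ := data m
    have h2 := hdot l hl m
    rw [h1] at h2
    have h3 : 0 ≤ (e : ℝ) * nu f (toR m) := mul_nonneg he0.le (gauge_nonneg _)
    have h4 : (0 : ℤ) ≤ ∑ i, ⌊(e : ℝ) * l i⌋ * (m i : ℤ) := by
      have : (0 : ℝ) ≤ ((∑ i, ⌊(e : ℝ) * l i⌋ * (m i : ℤ) : ℤ) : ℝ) := by rw [h2]; exact h3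
      exact_mod_cast this
    refine ⟨(∑ i, ⌊(e : ℝ) * l i⌋ * (m i : ℤ)).toNat, ?_⟩
    have h5 := Int.toNat_of_nonneg h4
    have h6 : (((∑ i, ⌊(e : ℝ) * l i⌋ * (m i : ℤ)).toNat : ℤ) : ℝ) = e * nu f (toR m) := by
      rw [h5, h2]; rfl
    exact_mod_cast h6
  choose N hN using hN
  have hsupp : ∀ v ∈ f.support, nu f (toR v) ≤ 1 := by
    intro v hv
    apply gauge_le_one_of_mem
    exact subset_convexHull ℝ _ (Or.inr ⟨v, hv, rfl⟩)
  have hwt : ∀ m : σ →₀ ℕ, ∃ w : (σ →₀ ℕ) → ℝ, (∀ v, 0 ≤ w v) ∧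
    (∀ i, (m i : ℝ) = ∑ v ∈ f.support, w v * (v i : ℝ)) ∧
    (e : ℝ) * ∑ v ∈ f.support, w v = N m ∧ ∀ v ∈ f.support, w v ≠ 0 → N v = e := by
    intro m
    obtain ⟨-, ⟨l, hl, h1⟩, w, hw0, hw1, hw2⟩ := data m
    have hsum : ∀ F : (σ → ℝ) → ℝ, ∑ v ∈ S, F v = ∑ v ∈ f.support, F (toR v) := fun F =>
      Finset.sum_image fun a _ b _ h => hinj h
    have hexp : nu f (toR m) = ∑ v ∈ f.support, w (toR v) * (l ⬝ᵥ toR v) := by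
      have h3 : nu f (toR m) = l ⬝ᵥ toR m := h1.symm
      rw [h3]
      conv_lhs => rw [hw2]
      rw [dotProduct_sum, hsum]
      simp only [dotProduct_smul, smul_eq_mul]
    have hl1 : ∀ v ∈ f.support, l ⬝ᵥ toR v ≤ 1 := fun v hv =>
      hl.1 _ (Finset.mem_image_of_mem _ hv)
    rw [hsum] at hw1
    have hle : ∑ v ∈ f.support, w (toR v) * (l ⬝ᵥ toR v) ≤ ∑ v ∈ f.support, w (toR v) :=
      Finset.sum_le_sum fun v hv => by nlinarith [hl1 v hv, hw0 (toR v)]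
    have heq : ∑ v ∈ f.support, w (toR v) = nu f (toR m) := le_antisymm hw1 (hexp ▸ hle)
    refine ⟨fun v => w (toR v), fun v => hw0 _, fun i => ?_, by rw [heq, hN], ?_⟩
    · have := congrFun hw2 i
      rw [Finset.sum_apply, hsum] at this
      simpa [toR] using this
    · intro v hv hne
      have h5 : ∑ v ∈ f.support, w (toR v) * (1 - l ⬝ᵥ toR v) = 0 := by
        simp only [mul_sub, mul_one, Finset.sum_sub_distrib]
        rw [heq, ← hexp, sub_self]
      have h6 := (Finset.sum_eq_zero_iff_of_nonneg (fun v hv =>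
        mul_nonneg (hw0 (toR v)) (by linarith [hl1 v hv]))).1 h5 v hv
      have h7 : l ⬝ᵥ toR v = 1 := by
        rcases mul_eq_zero.1 h6 with h | h
        · exact absurd h hne
        · linarith
      have h8 : nu f (toR v) = 1 :=
        le_antisymm (hsupp v hv) (h7 ▸ (data v).1 l hl.1)
      have := hN v
      rw [h8, mul_one] at this
      exact_mod_cast this
  refine ⟨⟨e, he, hfin.toFinset.image fun l i => ⌊(e : ℝ) * l i⌋, N, hN, ?_, ?_, ?_, hwt, ?_⟩⟩
  · intro m l' hl'
    obtain ⟨l, hl, rfl⟩ := Finset.mem_image.1 hl'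
    rw [Set.Finite.mem_toFinset] at hl
    have h1 := hdot l hl m
    have h2 := mul_le_mul_of_nonneg_left ((data m).1 l hl.1) he0.le
    have h3 : ((∑ i, ⌊(e : ℝ) * l i⌋ * (m i : ℤ) : ℤ) : ℝ) ≤ ((N m : ℤ) : ℝ) := by
      rw [h1, Int.cast_natCast, hN]; exact h2
    exact_mod_cast h3
  · intro m
    obtain ⟨-, ⟨l, hl, h1⟩, -⟩ := data m
    refine ⟨_, Finset.mem_image_of_mem _ (hfin.mem_toFinset.2 hl), ?_⟩
    have h3 : ((∑ i, ⌊(e : ℝ) * l i⌋ * (m i : ℤ) : ℤ) : ℝ) = ((N m : ℤ) : ℝ) := by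
      rw [hdot l hl m, Int.cast_natCast, hN, h1]; rfl
    exact_mod_cast h3
  · intro v hv
    have h1 := mul_le_mul_of_nonneg_left (hsupp v hv) he0.le
    rw [← hN, mul_one] at h1
    exact_mod_cast h1
  · intro c
    let B : ℕ := ∑ v ∈ f.support, ∑ i, v i
    refine (Set.finite_Iic (Finsupp.equivFunOnFinite.symm fun _ => B * c)).subset ?_
    intro m hm i
    simp only [Finsupp.equivFunOnFinite_symm_apply_apply]
    obtain ⟨w, hw0, hw1, hw2, -⟩ := hwt m
    have h1 : (m i : ℝ) ≤ ∑ v ∈ f.support, w v * (B : ℝ) := by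
      rw [hw1 i]
      refine Finset.sum_le_sum fun v hv => mul_le_mul_of_nonneg_left ?_ (hw0 v)
      have h2 : v i ≤ B := (Finset.single_le_sum (f := fun i => v i) (fun _ _ => Nat.zero_le _)
        (Finset.mem_univ i)).trans (Finset.single_le_sum (f := fun v : σ →₀ ℕ => ∑ i, v i)
        (fun _ _ => Nat.zero_le _) hv)
      exact_mod_cast h2
    rw [← Finset.sum_mul] at h1
    have h3 : ∑ v ∈ f.support, w v ≤ c := by
      have h4 : (N m : ℝ) ≤ c := by exact_mod_cast hm
      have h5 : 0 ≤ ∑ v ∈ f.support, w v := Finset.sum_nonneg fun v _ => hw0 v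
      have h6 : (1 : ℝ) ≤ e := by exact_mod_cast he
      nlinarith
    have h7 : (m i : ℝ) ≤ ((B * c : ℕ) : ℝ) := by
      push_cast
      have : (0 : ℝ) ≤ B := Nat.cast_nonneg _
      nlinarith
    exact_mod_cast h7

end

end ToricNewton


namespace ToricNewton

section
set_option linter.unusedSectionVars false
variable {σ : Type} [Fintype σ] [DecidableEq σ] {f : MvPolynomial σ ℂ}

namespace NData

variable (D : NData f)

lemma N_le (m : σ →₀ ℕ) (c : ℤ) (h : ∀ l ∈ D.Λ, ∑ i, l i * (m i : ℤ) ≤ c) : (D.N m : ℤ) ≤ c := by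
  obtain ⟨l, hl, h1⟩ := D.att m
  rw [← h1]; exact h l hl

lemma N_zero : D.N 0 = 0 := by
  have := D.N_le 0 0 (by simp)
  lia

lemma N_add (a b : σ →₀ ℕ) : D.N (a + b) ≤ D.N a + D.N b := by
  have := D.N_le (a + b) (D.N a + D.N b) (by
    intro l hl
    have h1 := D.le_N a l hl
    have h2 := D.le_N b l hl
    simp only [Finsupp.add_apply, Nat.cast_add, mul_add, Finset.sum_add_distrib]
    lia)
  exact_mod_cast this

/-- Peeling off a multiple of a vertex. -/
lemma peel (K : ℕ) (m : σ →₀ ℕ) (h : D.e * K * f.support.card < D.N m) :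
    ∃ v ∈ f.support, D.N v = D.e ∧ K • v ≤ m ∧ D.N (m - K • v) + D.e * K ≤ D.N m := by
  obtain ⟨w, hw0, hw1, hw2, hw3⟩ := D.wt m
  have he : (0 : ℝ) < D.e := by exact_mod_cast D.he
  have hex : ∃ v ∈ f.support, (K : ℝ) < w v := by
    by_contra hcon
    push Not at hcon
    have h1 : ∑ v ∈ f.support, w v ≤ f.support.card • (K : ℝ) := Finset.sum_le_card_nsmul _ _ _ hcon
    have h2 : ((D.e * K * f.support.card : ℕ) : ℝ) < D.N m := by exact_mod_cast h
    rw [← hw2] at h2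
    push_cast at h2
    rw [nsmul_eq_mul] at h1
    have h3 := mul_le_mul_of_nonneg_left h1 he.le
    linarith
  obtain ⟨v, hv, hKv⟩ := hex
  have hle : K • v ≤ m := by
    intro i
    have h1 : w v * (v i : ℝ) ≤ m i := by
      rw [hw1 i]
      exact Finset.single_le_sum (f := fun v : σ →₀ ℕ => w v * (v i : ℝ))
        (fun u _ => mul_nonneg (hw0 u) (Nat.cast_nonneg _)) hv
    have h2 : ((K * v i : ℕ) : ℝ) ≤ m i := by
      push_cast
      have : (0 : ℝ) ≤ v i := Nat.cast_nonneg _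
      nlinarith
    simp only [Finsupp.smul_apply, smul_eq_mul]
    exact_mod_cast h2
  have hNv : D.N v = D.e := hw3 v hv (by
    have : (0 : ℝ) ≤ K := Nat.cast_nonneg _
    linarith)
  refine ⟨v, hv, hNv, hle, ?_⟩
  have h5 : (D.N (m - K • v) : ℤ) ≤ D.N m - D.e * K := by
    apply D.N_le
    intro l hl
    have hR : ((∑ i, l i * ((m - K • v) i : ℤ) : ℤ) : ℝ) ≤ ((D.N m - D.e * K : ℤ) : ℝ) := by
      have hu : ∀ u ∈ f.support, (∑ i, (l i : ℝ) * (u i : ℝ)) ≤ D.e := by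
        intro u hu
        have h1 := (D.le_N u l hl).trans (by exact_mod_cast D.Nsupp u hu : (D.N u : ℤ) ≤ D.e)
        exact_mod_cast h1
      have hm : ∑ i, (l i : ℝ) * (m i : ℝ)
          = ∑ u ∈ f.support, w u * ∑ i, (l i : ℝ) * (u i : ℝ) := by
        simp only [hw1, Finset.mul_sum]
        rw [Finset.sum_comm]
        exact Finset.sum_congr rfl fun u _ => Finset.sum_congr rfl fun i _ => by ring
      have hsplit : ((∑ i, l i * ((m - K • v) i : ℤ) : ℤ) : ℝ)
          = ∑ i, (l i : ℝ) * (m i : ℝ) - K * ∑ i, (l i : ℝ) * (v i : ℝ) := by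
        push_cast
        rw [Finset.mul_sum, ← Finset.sum_sub_distrib]
        refine Finset.sum_congr rfl fun i _ => ?_
        have h1 := hle i
        simp only [Finsupp.smul_apply, smul_eq_mul] at h1
        rw [show ((⇑m - K • ⇑v) i) = m i - K * v i from rfl, Nat.cast_sub h1]; push_cast; ring
      rw [hsplit, hm]
      push_cast
      rw [← hw2, ← Finset.add_sum_erase _ _ hv, ← Finset.add_sum_erase _ w hv]
      have h6 : ∑ u ∈ f.support.erase v, w u * ∑ i, (l i : ℝ) * (u i : ℝ)
          ≤ ∑ u ∈ f.support.erase v, w u * D.e :=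
        Finset.sum_le_sum fun u hu' => mul_le_mul_of_nonneg_left
          (hu u (Finset.mem_of_mem_erase hu')) (hw0 u)
      rw [← Finset.sum_mul] at h6
      have h7 := hu v hv
      nlinarith
    exact_mod_cast hR
  zify
  linarith

/-- The functionals defining the Rees cone. -/
def cl : Set (Option σ → ℤ) := (fun (l : σ → ℤ) (o : Option σ) => o.elim 1 fun i => - l i) '' D.Λ

lemma cl_finite : D.cl.Finite := D.Λ.finite_toSet.image _

lemma mem_M {b : Option σ →₀ ℕ} : b ∈ coneMon D.cl ↔ D.N b.some ≤ b none := by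
  rw [mem_coneMon]
  constructor
  · intro h
    have := D.N_le b.some (b none) (by
      intro l hl
      have h1 := h _ ⟨l, hl, rfl⟩
      rw [Fintype.sum_option] at h1
      simp only [Option.elim_none, Option.elim_some, one_mul, neg_mul, Finset.sum_neg_distrib] at h1
      simp only [Finsupp.some_apply]
      linarith)
    exact_mod_cast this
  · rintro h _ ⟨l, hl, rfl⟩
    rw [Fintype.sum_option]
    simp only [Option.elim_none, Option.elim_some, one_mul, neg_mul, Finset.sum_neg_distrib]
    have h1 := D.le_N b.some l hl
    simp only [Finsupp.some_apply] at h1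
    lia

lemma elim_mem_M {m : σ →₀ ℕ} {j : ℕ} : m.optionElim j ∈ coneMon D.cl ↔ D.N m ≤ j := by
  rw [mem_M, Finsupp.some_optionElim, Finsupp.optionElim_apply_none]

lemma M_finite (s : ℕ) : {b | b ∈ coneMon D.cl ∧ b none < s}.Finite := by
  refine (((D.fin s).prod (Set.finite_Iio s)).image
    (fun p : (σ →₀ ℕ) × ℕ => p.1.optionElim p.2)).subset ?_
  rintro b ⟨hb, hs⟩
  rw [mem_M] at hb
  exact ⟨(b.some, b none), ⟨by show D.N b.some ≤ s; lia, hs⟩, Finsupp.optionElim_some b⟩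

lemma hX (i : Option σ) : ∃ a ∈ coneMon D.cl, a + Finsupp.single i 1 ∈ coneMon D.cl := by
  cases i with
  | none =>
    refine ⟨0, zero_mem _, ?_⟩
    rw [mem_M]; simp [N_zero]
  | some i =>
    refine ⟨(0 : σ →₀ ℕ).optionElim (D.N (Finsupp.single i 1)), ?_, ?_⟩
    · rw [elim_mem_M, N_zero]; exact Nat.zero_le _
    · rw [mem_M]; simp [Finsupp.some_add, Finsupp.some_optionElim, Finsupp.optionElim_apply_none]

/-- Decomposition of elements of the cone. -/
lemma decomp (K : ℕ) (b : Option σ →₀ ℕ) (hb : b ∈ coneMon D.cl)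
    (hbN : D.e * K * f.support.card + 1 ≤ b none) :
    (∃ b' ∈ coneMon D.cl, b = Finsupp.single none 1 + b') ∨
    ∃ v ∈ f.support, D.N v = D.e ∧ ∃ b' ∈ coneMon D.cl, b = K • (v.optionElim D.e) + b' := by
  have hb1 := D.mem_M.1 hb
  by_cases h : D.N b.some < b none
  · left
    refine ⟨b.some.optionElim (b none - 1), D.elim_mem_M.2 (by lia), ?_⟩
    ext o
    cases o with
    | none => simp [Finsupp.optionElim_apply_none]; lia
    | some i => simp [Finsupp.optionElim_apply_some]
  · right
    obtain ⟨v, hv, hNv, hle, hN⟩ := D.peel K b.some (by lia)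
    refine ⟨v, hv, hNv, (b.some - K • v).optionElim (b none - D.e * K),
      D.elim_mem_M.2 (by lia), ?_⟩
    ext o
    cases o with
    | none =>
      simp only [Finsupp.add_apply, Finsupp.smul_apply, Finsupp.optionElim_apply_none, smul_eq_mul]
      rw [mul_comm K]
      lia
    | some i =>
      have := hle i
      simp only [Finsupp.add_apply, Finsupp.smul_apply, Finsupp.optionElim_apply_some, smul_eq_mul,
        Finsupp.tsub_apply, Finsupp.some_apply] at this ⊢
      lia

lemma RM_finiteType : Algebra.FiniteType ℂ (RM ℂ (coneMon D.cl)) := by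
  classical
  rw [← Subalgebra.fg_iff_finiteType]
  let G : Set (MvPolynomial (Option σ) ℂ) := (fun b => monomial b 1) ''
    {b | b ∈ coneMon D.cl ∧ b none < D.e * 1 * f.support.card + 2}
  have hG : G.Finite := (D.M_finite _).image _
  have hmon : ∀ (j : ℕ) (b : Option σ →₀ ℕ), b none = j → b ∈ coneMon D.cl →
      (monomial b (1 : ℂ)) ∈ Algebra.adjoin ℂ G := by
    intro j
    induction j using Nat.strong_induction_on with
    | _ j ih =>
      intro b hbj hb
      by_cases hsm : b none < D.e * 1 * f.support.card + 2
      · exact Algebra.subset_adjoin ⟨b, ⟨hb, hsm⟩, rfl⟩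
      · rcases D.decomp 1 b hb (by lia) with ⟨b', hb', heq⟩ | ⟨v, hv, hNv, b', hb', heq⟩
        · have h1 : monomial b (1 : ℂ) = monomial (Finsupp.single none 1) 1 * monomial b' 1 := by
            rw [monomial_mul, one_mul, heq]
          have h0 : b none = 1 + b' none := by
            have := DFunLike.congr_fun heq none
            simpa using this
          rw [h1]
          refine mul_mem (Algebra.subset_adjoin ⟨_, ⟨?_, ?_⟩, rfl⟩) (ih _ (by lia) b' rfl hb')
          · rw [mem_M]; simp [N_zero]
          · simp
        · have h1 : monomial b (1 : ℂ) = monomial (v.optionElim D.e) 1 * monomial b' 1 := by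
            rw [monomial_mul, one_mul, heq, one_smul]
          have h0 : b none = D.e + b' none := by
            have := DFunLike.congr_fun heq none
            simpa [Finsupp.optionElim_apply_none] using this
          have he := D.he
          rw [h1]
          refine mul_mem (Algebra.subset_adjoin ⟨_, ⟨?_, ?_⟩, rfl⟩) (ih _ (by lia) b' rfl hb')
          · rw [elim_mem_M, hNv]
          · have : 1 ≤ f.support.card := Finset.card_pos.2 ⟨v, hv⟩
            rw [Finsupp.optionElim_apply_none]
            nlinarith
  refine ⟨hG.toFinset, ?_⟩
  rw [hG.coe_toFinset]
  apply le_antisymm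
  · rw [Algebra.adjoin_le_iff]
    rintro _ ⟨b, hb, rfl⟩
    exact monomial_mem_RM hb.1 1
  · intro g hg
    rw [g.as_sum]
    refine Subalgebra.sum_mem _ fun b hb => ?_
    have : monomial b (coeff b g) = (coeff b g) • monomial b (1 : ℂ) := by
      rw [smul_monomial, smul_eq_mul, mul_one]
    rw [this]
    exact Subalgebra.smul_mem _ (hmon _ b rfl (hg b (mem_support_iff.1 hb))) _

end NData

lemma exists_char (R : Type*) [CommRing R] [Algebra ℂ R] [Algebra.FiniteType ℂ R] (I : Ideal R)
    (y : R) (hy : y ∉ I.radical) : ∃ χ : R →ₐ[ℂ] ℂ, (∀ a ∈ I, χ a = 0) ∧ χ y ≠ 0 := by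
  have hJ : IsJacobsonRing R := isJacobsonRing_of_finiteType (A := ℂ)
  have h1 : I.radical.jacobson = I.radical :=
    isJacobsonRing_iff.1 hJ _ (Ideal.radical_isRadical I)
  rw [← h1] at hy
  unfold Ideal.jacobson at hy
  rw [Submodule.mem_sInf] at hy
  push Not at hy
  obtain ⟨m, ⟨hIm, hm⟩, hym⟩ := hy
  let _ := Ideal.Quotient.field m
  have hfin : Module.Finite ℂ (R ⧸ m) := finite_of_finite_type_of_isJacobsonRing ℂ (R ⧸ m)
  have hbij : Function.Bijective (algebraMap ℂ (R ⧸ m)) :=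
    IsAlgClosed.algebraMap_bijective_of_isIntegral
  let E : ℂ ≃ₐ[ℂ] (R ⧸ m) := AlgEquiv.ofBijective (Algebra.ofId ℂ (R ⧸ m)) hbij
  refine ⟨E.symm.toAlgHom.comp (Ideal.Quotient.mkₐ ℂ m), fun a ha => ?_, fun h => hym ?_⟩
  · have : Ideal.Quotient.mkₐ ℂ m a = 0 :=
      Ideal.Quotient.eq_zero_iff_mem.2 (hIm (Ideal.le_radical ha))
    rw [AlgHom.comp_apply, this, map_zero]
  · rw [AlgHom.comp_apply] at h
    have h2 : E.symm (Ideal.Quotient.mkₐ ℂ m y) = 0 := h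
    rw [map_eq_zero_iff _ E.symm.injective] at h2
    exact Ideal.Quotient.eq_zero_iff_mem.1 h2

end

end ToricNewton


namespace ToricNewton

section
set_option linter.unusedSectionVars false
variable {σ : Type} [Fintype σ] [DecidableEq σ]

lemma baer_units : Module.Baer ℤ (Additive ℂˣ) := by
  let _ : DivisibleBy (Additive ℂˣ) ℤ := by
    refine divisibleByOfSMulRightSurj (Additive ℂˣ) ℤ ?_
    intro n hn u
    obtain ⟨z, hz⟩ := IsAlgClosed.exists_pow_nat_eq (u.toMul : ℂ) (Int.natAbs_pos.2 hn)
    have hz0 : z ≠ 0 := by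
      rintro rfl
      rw [zero_pow (Int.natAbs_pos.2 hn).ne'] at hz
      exact u.toMul.ne_zero hz.symm
    have h1 : (Units.mk0 z hz0) ^ n.natAbs = u.toMul := by
      ext; simpa using hz
    rcases Int.natAbs_eq n with h | h
    · refine ⟨Additive.ofMul (Units.mk0 z hz0), ?_⟩
      apply Additive.toMul.injective
      show (Units.mk0 z hz0) ^ n = u.toMul
      rw [h, zpow_natCast, h1]
    · refine ⟨Additive.ofMul (Units.mk0 z hz0)⁻¹, ?_⟩
      apply Additive.toMul.injective
      show (Units.mk0 z hz0)⁻¹ ^ n = u.toMul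
      rw [h, inv_zpow, zpow_neg, inv_inv, zpow_natCast, h1]
  exact Module.Baer.of_divisible _

lemma torus_lemma (V : Finset (σ →₀ ℕ)) (c : (σ →₀ ℕ) → ℂ) (hc : ∀ v ∈ V, c v ≠ 0)
    (hrel : ∀ a b : (σ →₀ ℕ) → ℕ, ∑ v ∈ V, a v • v = ∑ v ∈ V, b v • v →
      ∏ v ∈ V, c v ^ a v = ∏ v ∈ V, c v ^ b v) :
    ∃ x : σ → ℂ, (∀ i, x i ≠ 0) ∧ ∀ v ∈ V, ∏ i, x i ^ v i = c v := by
  classical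
  let u : V → ℂˣ := fun t => Units.mk0 (c t) (hc t t.2)
  let π : (V → ℤ) →ₗ[ℤ] (σ → ℤ) := Fintype.linearCombination ℤ fun t i => ((t : σ →₀ ℕ) i : ℤ)
  let g : (V → ℤ) →ₗ[ℤ] Additive ℂˣ := Fintype.linearCombination ℤ fun t => Additive.ofMul (u t)
  have hker : LinearMap.ker π ≤ LinearMap.ker g := by
    intro a ha
    rw [LinearMap.mem_ker] at ha ⊢
    have hg : (g a).toMul = ∏ t, u t ^ a t := by
      simp only [g, Fintype.linearCombination_apply]
      rw [toMul_sum]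
      rfl
    apply Additive.toMul.injective
    rw [hg]
    show _ = (1 : ℂˣ)
    have hπ : ∀ i, ∑ t, a t * ((t : σ →₀ ℕ) i : ℤ) = 0 := by
      intro i
      have := congrFun ha i
      simpa [π, Fintype.linearCombination_apply, Finset.sum_apply] using this
    let ap : (σ →₀ ℕ) → ℕ := fun v => if h : v ∈ V then (a ⟨v, h⟩).toNat else 0
    let am : (σ →₀ ℕ) → ℕ := fun v => if h : v ∈ V then (-a ⟨v, h⟩).toNat else 0
    have hap : ∀ t : V, ap t = (a t).toNat := fun t => by simp [ap]
    have ham : ∀ t : V, am t = (-a t).toNat := fun t => by simp [am]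
    have h1 := hrel ap am (by
      ext i
      rw [← Finset.sum_coe_sort V, ← Finset.sum_coe_sort V]
      simp only [Finsupp.coe_finsetSum, Finset.sum_apply, Finsupp.smul_apply, smul_eq_mul, hap, ham]
      zify
      rw [← sub_eq_zero, ← Finset.sum_sub_distrib, ← hπ i]
      refine Finset.sum_congr rfl fun t _ => ?_
      rw [← sub_mul]
      congr 1
      lia)
    rw [← Finset.prod_coe_sort V, ← Finset.prod_coe_sort V] at h1
    simp only [hap, ham] at h1
    have h2 : ∏ t, u t ^ (a t).toNat = ∏ t, u t ^ (-a t).toNat := by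
      ext
      simpa [u] using h1
    have h3 : ∀ t, u t ^ a t = u t ^ (a t).toNat * (u t ^ (-a t).toNat)⁻¹ := by
      intro t
      rw [← zpow_natCast, ← zpow_natCast, ← zpow_neg, ← zpow_add]
      congr 1
      lia
    simp only [h3, Finset.prod_mul_distrib, Finset.prod_inv_distrib, h2, mul_inv_cancel]
  obtain ⟨h, hh⟩ := baer_units.extension_property ((LinearMap.ker π).liftQ π le_rfl)
    (LinearMap.ker_eq_bot.1 (Submodule.ker_liftQ_eq_bot _ _ _ le_rfl))
    ((LinearMap.ker π).liftQ g hker)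
  refine ⟨fun i => ((h (Pi.single i 1)).toMul : ℂˣ), fun i => Units.ne_zero _, fun v hv => ?_⟩
  have h1 : h (fun i => (v i : ℤ)) = Additive.ofMul (u ⟨v, hv⟩) := by
    have h2 := LinearMap.congr_fun hh ((LinearMap.ker π).mkQ (Pi.single ⟨v, hv⟩ 1))
    simp only [LinearMap.comp_apply, Submodule.mkQ_apply, Submodule.liftQ_apply] at h2
    have h3 : π (Pi.single ⟨v, hv⟩ 1) = fun i => (v i : ℤ) := by
      simp [π, Fintype.linearCombination_apply_single]
    have h4 : g (Pi.single ⟨v, hv⟩ 1) = Additive.ofMul (u ⟨v, hv⟩) := by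
      simp [g, Fintype.linearCombination_apply_single]
    rw [h3, h4] at h2
    exact h2
  have h5 : (fun i => (v i : ℤ)) = ∑ i, v i • (Pi.single i (1 : ℤ) : σ → ℤ) := by
    ext j
    simp [Finset.sum_apply, Pi.single_apply]
  rw [h5, map_sum] at h1
  have h6 := congrArg (fun z : Additive ℂˣ => ((z.toMul : ℂˣ) : ℂ)) h1
  simp only [toMul_sum, map_nsmul, toMul_nsmul, toMul_ofMul] at h6
  rw [Units.coe_prod] at h6
  simpa [u] using h6

end

end ToricNewton


namespace ToricNewton

section
set_option linter.unusedSectionVars false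
variable {σ : Type} [Fintype σ] [DecidableEq σ] {f : MvPolynomial σ ℂ}

lemma coeff_X_mul_pderiv (i : σ) (g : MvPolynomial σ ℂ) (m : σ →₀ ℕ) :
    coeff m (X i * pderiv i g) = (m i : ℂ) * coeff m g := by
  classical
  induction g using MvPolynomial.induction_on' with
  | monomial u a =>
    have h : X i * pderiv i (monomial u a) = monomial u (a * (u i : ℂ)) := by
      rw [pderiv_monomial]
      by_cases hu : u i = 0
      · simp [hu]
      · have : X i = monomial (Finsupp.single i 1) (1 : ℂ) := rfl
        have h2 : Finsupp.single i 1 + (u - Finsupp.single i 1) = u := by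
          ext j
          by_cases hj : i = j
          · subst hj; simp; lia
          · simp [Finsupp.single_apply, hj]
        rw [this, monomial_mul, one_mul, h2]
    rw [h, coeff_monomial, coeff_monomial]
    split_ifs with h1
    · subst h1; ring
    · simp
  | add p q hp hq =>
    rw [map_add, mul_add, coeff_add, coeff_add, hp, hq]; ring

namespace NData
variable (D : NData f)

/-- A multiplicative function on the Rees cone killing the Rees parameter. -/
structure MC (c : (Option σ →₀ ℕ) → ℂ) : Prop where
  add : ∀ a ∈ coneMon D.cl, ∀ b ∈ coneMon D.cl, c (a + b) = c a * c b
  zero : c 0 = 1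
  t : c (Finsupp.single none 1) = 0

variable {D} {c : (Option σ →₀ ℕ) → ℂ}

lemma MC.ne (hc : MC D c) {b : Option σ →₀ ℕ} (hb : b ∈ coneMon D.cl) (h : c b ≠ 0) : b none = D.N b.some := by
  have h1 := D.mem_M.1 hb
  by_contra hne
  apply h
  have h2 : b = Finsupp.single none 1 + b.some.optionElim (b none - 1) := by
    ext o
    cases o with
    | none => simp [Finsupp.optionElim_apply_none]; lia
    | some i => simp [Finsupp.optionElim_apply_some]
  rw [h2, hc.add _ _ _ (D.elim_mem_M.2 (by lia)), hc.t, zero_mul]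
  rw [D.mem_M]; simp [N_zero]

lemma MC.sum (hc : MC D c) (V : Finset (σ →₀ ℕ)) (a : (σ →₀ ℕ) → ℕ) (hV : ∀ v ∈ V, D.N v ≤ D.e) :
    (∑ v ∈ V, a v • v.optionElim D.e) ∈ coneMon D.cl ∧
    c (∑ v ∈ V, a v • v.optionElim D.e) = ∏ v ∈ V, c (v.optionElim D.e) ^ a v := by
  classical
  have hsm : ∀ v ∈ V, ∀ k : ℕ, c (k • v.optionElim D.e) = c (v.optionElim D.e) ^ k := by
    intro v hv k
    induction k with
    | zero => simp [hc.zero]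
    | succ k ih =>
      have hm := D.elim_mem_M.2 (hV v hv)
      rw [succ_nsmul, hc.add _ (AddSubmonoid.nsmul_mem _ hm k) _ hm, ih, pow_succ]
  have hmem : ∀ W ⊆ V, (∑ v ∈ W, a v • v.optionElim D.e) ∈ coneMon D.cl := fun W hW =>
    sum_mem fun v hv => AddSubmonoid.nsmul_mem _ (D.elim_mem_M.2 (hV v (hW hv))) _
  refine ⟨hmem V subset_rfl, ?_⟩
  have : ∀ W ⊆ V, c (∑ v ∈ W, a v • v.optionElim D.e) = ∏ v ∈ W, c (v.optionElim D.e) ^ a v := by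
    intro W
    induction W using Finset.induction_on with
    | empty => intro _; simp [hc.zero]
    | insert v W hv ih =>
      intro hW
      have hvV := hW (Finset.mem_insert_self _ _)
      have hWV := (Finset.subset_insert v W).trans hW
      rw [Finset.sum_insert hv, Finset.prod_insert hv, hc.add _
        (AddSubmonoid.nsmul_mem _ (D.elim_mem_M.2 (hV v hvV)) _) _ (hmem W hWV), ih hWV, hsm v hvV]
  exact this V subset_rfl

lemma sum_elim_some (V : Finset (σ →₀ ℕ)) (a : (σ →₀ ℕ) → ℕ) (e : ℕ) :
    (∑ v ∈ V, a v • v.optionElim e).some = ∑ v ∈ V, a v • v := by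
  ext i
  simp [Finsupp.coe_finsetSum, Finset.sum_apply, Finsupp.optionElim_apply_some]

lemma sum_elim_none (V : Finset (σ →₀ ℕ)) (a : (σ →₀ ℕ) → ℕ) (e : ℕ) :
    (∑ v ∈ V, a v • v.optionElim e) none = ∑ v ∈ V, a v * e := by
  simp [Finsupp.coe_finsetSum, Finset.sum_apply, Finsupp.optionElim_apply_none]

lemma MC.N_sum (hc : MC D c) (V : Finset (σ →₀ ℕ)) (a : (σ →₀ ℕ) → ℕ) (hV : ∀ v ∈ V, D.N v ≤ D.e)
    (hV0 : ∀ v ∈ V, c (v.optionElim D.e) ≠ 0) :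
    D.N (∑ v ∈ V, a v • v) = (∑ v ∈ V, a v) * D.e := by
  obtain ⟨h1, h2⟩ := hc.sum V a hV
  have h3 := hc.ne h1 (by
    rw [h2]; exact Finset.prod_ne_zero_iff.2 fun v hv => pow_ne_zero _ (hV0 v hv))
  rw [sum_elim_none, sum_elim_some] at h3
  rw [← h3, Finset.sum_mul]

lemma face_lemma (hc : MC D c) (V : Finset (σ →₀ ℕ))
    (hVdef : ∀ v, v ∈ V ↔ v ∈ f.support ∧ c (v.optionElim D.e) ≠ 0) (hne : V.Nonempty) :
    ∃ Δ, NBFace f Δ ∧ ∀ m ∈ f.support, (toR m ∈ Δ ↔ m ∈ V) := by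
  classical
  have he := D.he
  have hV : ∀ v ∈ V, D.N v ≤ D.e := fun v hv => D.Nsupp v ((hVdef v).1 hv).1
  have hV0 : ∀ v ∈ V, c (v.optionElim D.e) ≠ 0 := fun v hv => ((hVdef v).1 hv).2
  set m0 : σ →₀ ℕ := ∑ v ∈ V, v with hm0
  have hNm0 : D.N m0 = V.card * D.e := by
    have := hc.N_sum V (fun _ => 1) hV hV0
    simpa using this
  have hm0i : ∀ i, m0 i = ∑ v ∈ V, v i := fun i => by
    simp [hm0, Finsupp.coe_finsetSum, Finset.sum_apply]
  let dot : (σ → ℤ) → (σ →₀ ℕ) → ℤ := fun l m => ∑ i, l i * (m i : ℤ)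
  have hdotsum : ∀ l, dot l m0 = ∑ v ∈ V, dot l v := by
    intro l
    simp only [dot, hm0i]
    rw [Finset.sum_comm]
    refine Finset.sum_congr rfl fun i _ => ?_
    push_cast
    rw [Finset.mul_sum]
  let A := D.Λ.filter fun l => dot l m0 = D.N m0
  have hA : ∀ l, l ∈ A ↔ l ∈ D.Λ ∧ dot l m0 = D.N m0 := fun l => Finset.mem_filter
  have hAne : A.Nonempty := by
    obtain ⟨l, hl, h⟩ := D.att m0
    exact ⟨l, (hA l).2 ⟨hl, h⟩⟩
  have hdotle : ∀ l ∈ D.Λ, ∀ m ∈ f.support, dot l m ≤ D.e := fun l hl m hm =>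
    (D.le_N m l hl).trans (by exact_mod_cast D.Nsupp m hm)
  let Zs : Finset σ := Finset.univ.filter fun i => m0 i = 0
  let φ : (σ →₀ ℕ) → ℤ := fun m => ∑ l ∈ A, dot l m - ∑ i ∈ Zs, (m i : ℤ)
  have hs1 : ∀ m ∈ f.support, ∑ l ∈ A, dot l m ≤ D.e * A.card := by
    intro m hm
    have := Finset.sum_le_card_nsmul A (fun l => dot l m) D.e
      (fun l hl => hdotle l ((hA l).1 hl).1 m hm)
    rw [nsmul_eq_mul, mul_comm] at this
    exact this
  have hs2 : ∀ m : σ →₀ ℕ, 0 ≤ ∑ i ∈ Zs, (m i : ℤ) := fun m =>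
    Finset.sum_nonneg fun i _ => Int.natCast_nonneg _
  have hφle : ∀ m ∈ f.support, φ m ≤ D.e * A.card := by
    intro m hm
    have h1 := hs1 m hm
    have h2 := hs2 m
    simp only [φ]; linarith
  have hφeq : ∀ m ∈ f.support, (φ m = D.e * A.card ↔ m ∈ V) := by
    intro w hw
    constructor
    · intro heq
      have h1 := hs1 w hw
      have h2 := hs2 w
      simp only [φ] at heq
      have h3 : ∑ i ∈ Zs, (w i : ℤ) = 0 := by linarith
      have h4 : ∀ i ∈ Zs, w i = 0 := by
        intro i hi
        have := (Finset.sum_eq_zero_iff_of_nonneg fun i _ => Int.natCast_nonneg _).1 h3 i hi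
        exact_mod_cast this
      have h5 : ∑ l ∈ A, ((D.e : ℤ) - dot l w) = 0 := by
        rw [Finset.sum_sub_distrib, Finset.sum_const, nsmul_eq_mul]
        linarith
      have h6 : ∀ l ∈ A, dot l w = D.e := by
        intro l hl
        have := (Finset.sum_eq_zero_iff_of_nonneg fun l hl => by
          have := hdotle l ((hA l).1 hl).1 w hw
          linarith).1 h5 l hl
        linarith
      let K : ℕ := ∑ i, w i + ∑ l ∈ D.Λ, ((D.e : ℤ) - dot l w).toNat
      have hKw : ∀ i, w i ≤ K := fun i =>
        (Finset.single_le_sum (f := fun i => w i) (fun _ _ => Nat.zero_le _)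
          (Finset.mem_univ i)).trans (Nat.le_add_right _ _)
      have hKl : ∀ l ∈ D.Λ, (D.e : ℤ) - dot l w ≤ K := by
        intro l hl
        have := (Finset.single_le_sum (f := fun l => ((D.e : ℤ) - dot l w).toNat)
          (fun _ _ => Nat.zero_le _) hl).trans (Nat.le_add_left _ (∑ i, w i))
        have h7 : ((D.e : ℤ) - dot l w).toNat ≤ K := this
        lia
      have hwle : w ≤ K • m0 := by
        intro i
        by_cases hi : m0 i = 0
        · rw [h4 i (Finset.mem_filter.2 ⟨Finset.mem_univ _, hi⟩)]; exact Nat.zero_le _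
        · simp only [Finsupp.smul_apply, smul_eq_mul]
          have := hKw i
          have h8 : 1 ≤ m0 i := Nat.one_le_iff_ne_zero.2 hi
          nlinarith
      have hNd : (D.N (K • m0 - w) : ℤ) ≤ K * (V.card * D.e) - D.e := by
        apply D.N_le
        intro l hl
        have hd : ∑ i, l i * (((K • m0 - w) i : ℕ) : ℤ) = K * dot l m0 - dot l w := by
          simp only [dot]
          rw [Finset.mul_sum, ← Finset.sum_sub_distrib]
          refine Finset.sum_congr rfl fun i _ => ?_
          have h9 := hwle i
          simp only [Finsupp.smul_apply, smul_eq_mul] at h9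
          rw [show (K • m0 - w) i = K * m0 i - w i from rfl, Nat.cast_sub h9]
          push_cast; ring
        rw [hd]
        have h10 := D.le_N m0 l hl
        rw [hNm0] at h10
        push_cast at h10
        by_cases hlA : l ∈ A
        · rw [h6 l hlA, ((hA l).1 hlA).2, hNm0]
          push_cast; linarith
        · have h11 : dot l m0 ≠ V.card * D.e := by
            intro h; exact hlA ((hA l).2 ⟨hl, by rw [h, hNm0]; push_cast; ring⟩)
          have h12 : dot l m0 ≤ V.card * D.e - 1 := by
            have : dot l m0 ≤ V.card * D.e := h10
            lia
          have h13 := hKl l hl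
          have h14 : (0 : ℤ) ≤ K := Int.natCast_nonneg _
          nlinarith
      have hKe : D.e ≤ K * (V.card * D.e) := by
        have : (0 : ℤ) ≤ D.N (K • m0 - w) := Int.natCast_nonneg _
        zify; linarith
      have hmem1 : (K • m0 - w).optionElim (K * (V.card * D.e) - D.e) ∈ coneMon D.cl := by
        rw [D.elim_mem_M]
        zify [hKe]
        exact hNd
      have hmem2 : w.optionElim D.e ∈ coneMon D.cl := D.elim_mem_M.2 (D.Nsupp w hw)
      have hsumeq : (K • m0 - w).optionElim (K * (V.card * D.e) - D.e) + w.optionElim D.e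
          = ∑ v ∈ V, K • v.optionElim D.e := by
        rw [← Finsupp.optionElim_add, tsub_add_cancel_of_le hwle, Nat.sub_add_cancel hKe]
        ext o
        cases o with
        | none =>
          rw [sum_elim_none V (fun _ => K), Finsupp.optionElim_apply_none]
          rw [Finset.sum_const, smul_eq_mul]; ring
        | some i =>
          rw [Finsupp.optionElim_apply_some, ← Finsupp.some_apply, sum_elim_some V (fun _ => K),
            hm0, Finset.smul_sum]
      obtain ⟨-, h15⟩ := hc.sum V (fun _ => K) hV
      rw [← hsumeq, hc.add _ hmem1 _ hmem2] at h15
      have h16 : ∏ v ∈ V, c (v.optionElim D.e) ^ K ≠ 0 :=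
        Finset.prod_ne_zero_iff.2 fun v hv => pow_ne_zero _ (hV0 v hv)
      rw [← h15] at h16
      exact (hVdef w).2 ⟨hw, right_ne_zero_of_mul h16⟩
    · intro hwV
      have h1 : ∀ l ∈ A, dot l w = D.e := by
        intro l hl
        have h2 := ((hA l).1 hl).2
        rw [hdotsum, hNm0] at h2
        have h3 : ∑ v ∈ V, ((D.e : ℤ) - dot l v) = 0 := by
          rw [Finset.sum_sub_distrib, h2, Finset.sum_const, nsmul_eq_mul]
          push_cast; ring
        have := (Finset.sum_eq_zero_iff_of_nonneg fun v hv => by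
          have := hdotle l ((hA l).1 hl).1 v ((hVdef v).1 hv).1
          linarith).1 h3 w hwV
        linarith
      have h2 : ∀ i ∈ Zs, (w i : ℤ) = 0 := by
        intro i hi
        have h3 := (Finset.mem_filter.1 hi).2
        rw [hm0i] at h3
        have := Finset.sum_eq_zero_iff.1 h3 w hwV
        exact_mod_cast this
      simp only [φ]
      rw [Finset.sum_congr rfl h1, Finset.sum_congr rfl h2, Finset.sum_const, nsmul_eq_mul]
      simp [mul_comm]
  let L : (σ → ℝ) →ₗ[ℝ] ℝ :=
    ∑ l ∈ A, ∑ i, (l i : ℝ) • LinearMap.proj i - ∑ i ∈ Zs, LinearMap.proj i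
  have hL : ∀ m : σ →₀ ℕ, L (toR m) = ((φ m : ℤ) : ℝ) := by
    intro m
    simp [L, φ, dot, toR, LinearMap.sum_apply]
  have hApos : (0 : ℝ) < (D.e * A.card : ℤ) := by
    have h1 : 0 < A.card := Finset.card_pos.2 hAne
    have h2 : 0 < D.e * A.card := Nat.mul_pos he h1
    exact_mod_cast h2
  obtain ⟨v0, hv0⟩ := hne
  have hv0s := ((hVdef v0).1 hv0).1
  refine ⟨{x ∈ newtonPolytope f | L x = (D.e * A.card : ℤ)}, ⟨⟨⟨toR v0, ?_, ?_⟩, L, _, ?_, rfl⟩, ?_⟩,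
    ?_⟩
  · exact subset_convexHull ℝ _ (Or.inr ⟨v0, hv0s, rfl⟩)
  · rw [hL, (hφeq v0 hv0s).2 hv0]
  · intro x hx
    have hsub : newtonPolytope f ⊆ {x | L x ≤ (D.e * A.card : ℤ)} := by
      apply convexHull_min
      · rintro y (rfl | ⟨m, hm, rfl⟩)
        · show L 0 ≤ _
          rw [map_zero]; exact hApos.le
        · show L (toR m) ≤ _
          rw [hL]; exact_mod_cast hφle m hm
      · exact convex_halfSpace_le (LinearMap.isLinear L) _
    exact hsub hx
  · rintro ⟨-, h0⟩
    rw [map_zero] at h0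
    exact hApos.ne h0
  · intro m hm
    constructor
    · rintro ⟨-, h⟩
      rw [hL] at h
      exact (hφeq m hm).1 (by exact_mod_cast h)
    · intro h
      exact ⟨subset_convexHull ℝ _ (Or.inr ⟨m, hm, rfl⟩), by rw [hL, (hφeq m hm).2 h]⟩

lemma contra (hc : MC D c) (hnd : Nondegenerate f)
    (hθ : ∀ i, ∑ m ∈ f.support, (m i : ℂ) * coeff m f * c (m.optionElim D.e) = 0)
    (v0 : σ →₀ ℕ) (hv0 : v0 ∈ f.support) (hcv0 : c (v0.optionElim D.e) ≠ 0) : False := by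
  classical
  have he := D.he
  let V := f.support.filter fun v => c (v.optionElim D.e) ≠ 0
  have hVdef : ∀ v, v ∈ V ↔ v ∈ f.support ∧ c (v.optionElim D.e) ≠ 0 := fun v => Finset.mem_filter
  have hV : ∀ v ∈ V, D.N v ≤ D.e := fun v hv => D.Nsupp v ((hVdef v).1 hv).1
  have hV0 : ∀ v ∈ V, c (v.optionElim D.e) ≠ 0 := fun v hv => ((hVdef v).1 hv).2
  obtain ⟨Δ, hΔ, hΔV⟩ := face_lemma hc V hVdef ⟨v0, (hVdef v0).2 ⟨hv0, hcv0⟩⟩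
  obtain ⟨x, hx0, hx⟩ := torus_lemma V (fun v => c (v.optionElim D.e)) hV0 (by
    intro a b hab
    have h1 := hc.N_sum V a hV hV0
    have h2 := hc.N_sum V b hV hV0
    rw [hab, h2] at h1
    rw [← (hc.sum V a hV).2, ← (hc.sum V b hV).2]
    congr 1
    ext o
    cases o with
    | none => rw [sum_elim_none, sum_elim_none, ← Finset.sum_mul, ← Finset.sum_mul, h1]
    | some i => rw [← Finsupp.some_apply, sum_elim_some, hab, ← sum_elim_some V b D.e,
        Finsupp.some_apply])
  refine hnd Δ hΔ ⟨x, hx0, fun i => ?_⟩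
  rw [faceRestrict, map_sum]
  have hsub : (X i * pderiv i f).support ⊆ f.support := by
    intro m hm
    rw [mem_support_iff, coeff_X_mul_pderiv] at hm
    exact mem_support_iff.2 (right_ne_zero_of_mul hm)
  rw [Finset.sum_subset hsub, ← hθ i]
  · refine Finset.sum_congr rfl fun m hm => ?_
    by_cases h : m ∈ V
    · rw [if_pos ((hΔV m hm).2 h), eval_monomial, coeff_X_mul_pderiv, ← hx m h,
        Finsupp.prod_fintype _ _ (by simp)]
    · rw [if_neg fun h' => h ((hΔV m hm).1 h'), map_zero]
      have : c (m.optionElim D.e) = 0 := by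
        by_contra h'
        exact h ((hVdef m).2 ⟨hm, h'⟩)
      rw [this, mul_zero]
  · intro m _ hm
    rw [notMem_support_iff.1 hm]
    simp

end NData

end

end ToricNewton


namespace ToricNewton

section
set_option linter.unusedSectionVars false
set_option linter.unusedSimpArgs false

/-- Degree projection with respect to one variable. -/
lemma exists_proj {τ : Type} [Fintype τ] (t0 : τ) (s : ℕ) :
    ∃ π : MvPolynomial τ ℂ →ₗ[ℂ] MvPolynomial τ ℂ,
      ∀ P b, coeff b (π P) = if b t0 = s then coeff b P else 0 := by
  classical
  refine ⟨weightedHomogeneousComponent (fun o => if o = t0 then 1 else 0) s, fun P b => ?_⟩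
  rw [coeff_weightedHomogeneousComponent]
  have : Finsupp.weight (fun o => if o = t0 then (1 : ℕ) else 0) b = b t0 := by
    rw [Finsupp.weight_apply, Finsupp.sum_fintype _ _ (by simp)]
    simp
  rw [this]

lemma proj_eq {τ : Type} [Fintype τ] (M : AddSubmonoid (τ →₀ ℕ)) (t0 : τ)
    (θ : τ → MvPolynomial τ ℂ) (d : τ → ℕ) (hd : ∀ i a, coeff a (θ i) ≠ 0 → a t0 = d i)
    (J : Finset τ) (s : ℕ) (x : MvPolynomial τ ℂ) (hx : ∀ a, coeff a x ≠ 0 → a t0 = s)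
    (r : τ → MvPolynomial τ ℂ) (hr : ∀ j, r j ∈ RM ℂ M) (h : x = ∑ j ∈ J, r j * θ j) :
    ∃ r' : τ → MvPolynomial τ ℂ, (∀ j, r' j ∈ RM ℂ M) ∧
      (∀ j a, coeff a (r' j) ≠ 0 → a t0 + d j = s) ∧ x = ∑ j ∈ J, r' j * θ j := by
  classical
  choose π hπ using fun s => exists_proj t0 s
  refine ⟨fun j => if d j ≤ s then π (s - d j) (r j) else 0, fun j => ?_, fun j a ha => ?_, ?_⟩
  · dsimp only
    split_ifs with h1
    · intro a ha
      rw [hπ] at ha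
      apply hr j a
      intro h0
      simp [h0] at ha
    · exact Subalgebra.zero_mem _
  · dsimp only at ha
    split_ifs at ha with h1
    · rw [hπ] at ha
      split_ifs at ha with h2
      · lia
      · simp at ha
    · simp at ha
  · have h1 : x = π s x := by
      ext b
      rw [hπ]
      split_ifs with h2
      · rfl
      · by_contra h3
        exact h2 (hx b h3)
    rw [h1]
    conv_lhs => rw [h]
    rw [map_sum]
    refine Finset.sum_congr rfl fun j _ => ?_
    ext b
    rw [hπ]
    have key : ∀ p ∈ Finset.HasAntidiagonal.antidiagonal b, coeff p.2 (θ j) ≠ 0 → p.1 t0 + d j = b t0 := by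
      intro p hp h2
      rw [Finset.HasAntidiagonal.mem_antidiagonal] at hp
      rw [← hd j _ h2, ← hp]; rfl
    dsimp only
    by_cases hds : d j ≤ s
    · rw [if_pos hds, coeff_mul, coeff_mul]
      have h5 : (if b t0 = s then ∑ p ∈ Finset.HasAntidiagonal.antidiagonal b,
          coeff p.1 (r j) * coeff p.2 (θ j) else 0) = ∑ p ∈ Finset.HasAntidiagonal.antidiagonal b,
          (if b t0 = s then coeff p.1 (r j) * coeff p.2 (θ j) else 0) := by
        split_ifs <;> simp
      rw [h5]
      refine Finset.sum_congr rfl fun p hp => ?_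
      by_cases h2 : coeff p.2 (θ j) = 0
      · simp [h2]
      · have := key p hp h2
        rw [hπ]
        by_cases h3 : b t0 = s
        · rw [if_pos h3, if_pos (by lia)]
        · rw [if_neg h3, if_neg (by lia), zero_mul]
    · rw [if_neg hds, zero_mul, coeff_zero]
      split_ifs with h3
      · rw [coeff_mul]
        apply Finset.sum_eq_zero
        intro p hp
        by_cases h2 : coeff p.2 (θ j) = 0
        · simp [h2]
        · have := key p hp h2
          lia
      · rfl

variable {σ : Type} [Fintype σ] [DecidableEq σ] {f : MvPolynomial σ ℂ}

/-- Homogenization in degree `j`. -/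
noncomputable def hom (j : ℕ) (g : MvPolynomial σ ℂ) : MvPolynomial (Option σ) ℂ :=
  X none ^ j * rename some g

lemma hom_monomial (j : ℕ) (m : σ →₀ ℕ) (c : ℂ) :
    hom j (monomial m c) = monomial (m.optionElim j) c := by
  have h : Finsupp.single none j + Finsupp.mapDomain some m = m.optionElim j := by
    ext o
    cases o with
    | none => simp [Finsupp.mapDomain_of_notMem_range]
    | some i => simp [Finsupp.mapDomain_apply (Option.some_injective _)]
  rw [hom, rename_monomial, X_pow_eq_monomial, monomial_mul, one_mul, h]

lemma hom_add (j : ℕ) (g h : MvPolynomial σ ℂ) : hom j (g + h) = hom j g + hom j h := by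
  simp [hom, mul_add]

lemma hom_mul (i j : ℕ) (g h : MvPolynomial σ ℂ) : hom i g * hom j h = hom (i + j) (g * h) := by
  simp only [hom, map_mul, pow_add]; ring

lemma hom_sum {ι : Type*} (j : ℕ) (S : Finset ι) (g : ι → MvPolynomial σ ℂ) :
    hom j (∑ i ∈ S, g i) = ∑ i ∈ S, hom j (g i) := by
  simp [hom, Finset.mul_sum]

lemma coeff_hom (j : ℕ) (g : MvPolynomial σ ℂ) (b : Option σ →₀ ℕ) :
    coeff b (hom j g) = if b none = j then coeff b.some g else 0 := by
  classical
  induction g using MvPolynomial.induction_on' with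
  | monomial u a =>
    rw [hom_monomial, coeff_monomial, coeff_monomial]
    by_cases h : u.optionElim j = b
    · subst h; simp
    · rw [if_neg h]
      split_ifs with h1 h2
      · exfalso; apply h; subst h2; subst h1
        ext o; cases o <;> simp
      · rfl
      · rfl
  | add p q hp hq =>
    rw [hom_add, coeff_add, hp, hq, coeff_add]
    split_ifs <;> simp

/-- Dehomogenization. -/
noncomputable def deh : MvPolynomial (Option σ) ℂ →ₐ[ℂ] MvPolynomial σ ℂ :=
  aeval (fun o => o.elim 1 X)

lemma deh_hom (j : ℕ) (g : MvPolynomial σ ℂ) : deh (hom j g) = g := by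
  rw [hom, map_mul, map_pow, deh, aeval_X, aeval_rename]
  have : (fun o : Option σ => o.elim (1 : MvPolynomial σ ℂ) X) ∘ some = X := rfl
  rw [this, aeval_X_left]; simp

lemma deh_X_none : deh (X none : MvPolynomial (Option σ) ℂ) = 1 := by simp [deh]

lemma eq_hom (P : MvPolynomial (Option σ) ℂ) (j : ℕ) (hP : ∀ a, coeff a P ≠ 0 → a none = j) :
    P = hom j (deh P) := by
  classical
  conv_lhs => rw [P.as_sum]
  conv_rhs => rw [P.as_sum]
  rw [map_sum, hom_sum]
  refine Finset.sum_congr rfl fun b hb => ?_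
  have h1 := hP b (mem_support_iff.1 hb)
  have h2 : b = b.some.optionElim j := by
    subst h1
    ext o; cases o <;> simp
  rw [h2, ← hom_monomial, deh_hom]

namespace NData
variable (D : NData f)

/-- The integer-indexed Newton filtration. -/
noncomputable def NZ (s : ℤ) : Submodule ℂ (MvPolynomial σ ℂ) where
  carrier := {g | ∀ m, coeff m g ≠ 0 → (D.N m : ℤ) ≤ s}
  zero_mem' := by simp
  add_mem' := by
    intro a b ha hb m hm
    by_cases h : coeff m a = 0
    · exact hb m (by simpa [h] using hm)
    · exact ha m h
  smul_mem' := by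
    intro c a ha m hm
    refine ha m fun h => hm (by simp [h])

lemma mem_NZ {s : ℤ} {g : MvPolynomial σ ℂ} :
    g ∈ D.NZ s ↔ ∀ m, coeff m g ≠ 0 → (D.N m : ℤ) ≤ s := Iff.rfl

lemma NZ_mono {s t : ℤ} (h : s ≤ t) : D.NZ s ≤ D.NZ t := fun _ hg m hm => (hg m hm).trans h

lemma NZ_neg {s : ℤ} (h : s < 0) {g : MvPolynomial σ ℂ} (hg : g ∈ D.NZ s) : g = 0 := by
  ext m
  by_contra h1
  have := hg m h1
  lia

lemma NZ_mul {s t : ℤ} {g h : MvPolynomial σ ℂ} (hg : g ∈ D.NZ s) (hh : h ∈ D.NZ t) :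
    g * h ∈ D.NZ (s + t) := by
  classical
  intro a ha
  rw [coeff_mul] at ha
  obtain ⟨⟨b, c⟩, hbc, h⟩ := Finset.exists_ne_zero_of_sum_ne_zero ha
  rw [Finset.HasAntidiagonal.mem_antidiagonal] at hbc
  have h1 := hg _ (left_ne_zero_of_mul h)
  have h2 := hh _ (right_ne_zero_of_mul h)
  have h3 := D.N_add b c
  dsimp only at h1 h2 hbc
  rw [hbc] at h3
  lia

lemma hom_mem {j : ℕ} {g : MvPolynomial σ ℂ} (hg : g ∈ D.NZ j) : hom j g ∈ RM ℂ (coneMon D.cl) := by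
  intro a ha
  rw [coeff_hom] at ha
  split_ifs at ha with h
  · have := hg _ ha
    rw [D.mem_M]; lia
  · simp at ha

lemma deh_mem {j : ℕ} {P : MvPolynomial (Option σ) ℂ} (hP : P ∈ RM ℂ (coneMon D.cl))
    (hj : ∀ a, coeff a P ≠ 0 → a none = j) : deh P ∈ D.NZ j := by
  intro m hm
  have h1 := eq_hom P j hj
  have h2 : coeff (m.optionElim j) P ≠ 0 := by
    rw [h1, coeff_hom]; simpa using hm
  have h3 := D.elim_mem_M.1 (hP _ h2)
  exact_mod_cast h3

/-- The toric derivatives. -/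
noncomputable def _root_.ToricNewton.Lp (f : MvPolynomial σ ℂ) (i : σ) : MvPolynomial σ ℂ := X i * pderiv i f

lemma Lp_mem (i : σ) : Lp f i ∈ D.NZ D.e := by
  intro m hm
  rw [Lp, coeff_X_mul_pderiv] at hm
  have := D.Nsupp m (mem_support_iff.2 (right_ne_zero_of_mul hm))
  exact_mod_cast this

/-- The homogenized system. -/
noncomputable def th : Option σ → MvPolynomial (Option σ) ℂ
  | none => X none
  | some i => hom D.e (Lp f i)

/-- Degrees of the homogenized system. -/
def dg : Option σ → ℕ
  | none => 1
  | some _ => D.e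

lemma dg_pos (i : Option σ) : 1 ≤ D.dg i := by
  cases i with
  | none => exact le_rfl
  | some i => exact D.he

lemma th_dg (i : Option σ) (a) (h : coeff a (D.th i) ≠ 0) : a none = D.dg i := by
  classical
  cases i with
  | none =>
    rw [th, coeff_X] at h
    split_ifs at h with h1
    · rw [← h1]; simp [dg]
    · simp at h
  | some i =>
    rw [th, coeff_hom] at h
    split_ifs at h with h1
    · exact h1
    · simp at h

lemma single_none_mem : Finsupp.single none 1 ∈ coneMon D.cl := by
  rw [D.mem_M]; simp [N_zero]

lemma th_mem (i : Option σ) : D.th i ∈ RM ℂ (coneMon D.cl) := by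
  cases i with
  | none => exact monomial_mem_RM D.single_none_mem 1
  | some i => exact D.hom_mem (D.Lp_mem i)

lemma rad (hnd : Nondegenerate f) (v : σ →₀ ℕ) (hv : v ∈ f.support) :
    ∃ K : ℕ, ∃ g : Option σ → MvPolynomial (Option σ) ℂ, (∀ i, g i ∈ RM ℂ (coneMon D.cl)) ∧
      monomial (K • v.optionElim D.e) 1 = ∑ i, g i * D.th i := by
  classical
  have hmemM : ∀ v ∈ f.support, v.optionElim D.e ∈ coneMon D.cl :=
    fun v hv => D.elim_mem_M.2 (D.Nsupp v hv)
  let R := RM ℂ (coneMon D.cl)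
  let θ : Option σ → R := fun i => ⟨D.th i, D.th_mem i⟩
  let I : Ideal R := Ideal.span (Set.range θ)
  let y : R := ⟨monomial (v.optionElim D.e) 1, monomial_mem_RM (hmemM v hv) 1⟩
  have hy : y ∈ I.radical := by
    by_contra hy
    haveI : Algebra.FiniteType ℂ R := D.RM_finiteType
    obtain ⟨χ, hχI, hχy⟩ := exists_char R I y hy
    let c : (Option σ →₀ ℕ) → ℂ := fun b =>
      if h : b ∈ coneMon D.cl then χ ⟨monomial b 1, monomial_mem_RM h 1⟩ else 0
    have hcdef : ∀ b (h : b ∈ coneMon D.cl), c b = χ ⟨monomial b 1, monomial_mem_RM h 1⟩ :=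
      fun b h => dif_pos h
    have hχθ : ∀ i, χ (θ i) = 0 := fun i => hχI _ (Ideal.subset_span ⟨i, rfl⟩)
    have hc : MC D c := by
      refine ⟨fun a ha b hb => ?_, ?_, ?_⟩
      · rw [hcdef a ha, hcdef b hb, hcdef _ (add_mem ha hb), ← map_mul]
        congr 1
        apply Subtype.ext
        simp [monomial_mul]
      · rw [hcdef 0 (zero_mem _)]
        exact map_one χ
      · rw [hcdef _ D.single_none_mem]
        exact hχθ none
    refine contra hc hnd (fun i => ?_) v hv ?_
    · rw [← hχθ (some i)]
      have h1 : θ (some i) = ∑ m : f.support, ((m.1 i : ℂ) * coeff m.1 f) •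
          (⟨monomial (m.1.optionElim D.e) 1, monomial_mem_RM (hmemM m.1 m.2) 1⟩ : R) := by
        apply Subtype.ext
        change hom D.e (Lp f i) = _
        rw [AddSubmonoidClass.coe_finsetSum]
        have h2 : Lp f i = ∑ m : f.support, monomial m.1 ((m.1 i : ℂ) * coeff m.1 f) := by
          ext m
          rw [Lp, coeff_X_mul_pderiv, coeff_sum]
          rw [Finset.sum_coe_sort f.support (fun m' => coeff m (monomial m' ((m' i : ℂ) * coeff m' f)))]
          simp only [coeff_monomial, Finset.sum_ite_eq']
          split_ifs with h3
          · rfl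
          · rw [notMem_support_iff.1 h3, mul_zero]
        rw [h2, hom_sum]
        refine Finset.sum_congr rfl fun m _ => ?_
        rw [hom_monomial]
        change _ = _ • monomial (m.1.optionElim D.e) (1 : ℂ)
        rw [smul_monomial, smul_eq_mul, mul_one]
      rw [h1, map_sum, ← Finset.sum_coe_sort f.support]
      refine Finset.sum_congr rfl fun m _ => ?_
      rw [map_smul, hcdef _ (hmemM m.1 m.2), smul_eq_mul]
    · rw [hcdef _ (hmemM v hv)]
      exact hχy
  obtain ⟨K, hK⟩ := hy
  rw [Ideal.mem_span_range_iff_exists_fun] at hK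
  obtain ⟨g, hg⟩ := hK
  refine ⟨K, fun i => (g i).1, fun i => (g i).2, ?_⟩
  have h3 := congrArg Subtype.val hg
  rw [AddSubmonoidClass.coe_finsetSum] at h3
  have h4 : ((y ^ K : R) : MvPolynomial (Option σ) ℂ) = monomial (K • v.optionElim D.e) 1 := by
    change (monomial (v.optionElim D.e) (1 : ℂ)) ^ K = _
    rw [monomial_pow, one_pow]
  rw [← h4, ← h3]
  rfl

lemma radK (hnd : Nondegenerate f) :
    ∃ K : ℕ, ∀ v ∈ f.support, Cert (coneMon D.cl) none D.th (K • v.optionElim D.e) := by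
  classical
  have h := fun v : f.support => D.rad hnd v.1 v.2
  choose K g hg hK using h
  refine ⟨∑ v, K v, fun v hv => ?_⟩
  set k := ∑ v, K v
  have hk : K ⟨v, hv⟩ ≤ k := Finset.single_le_sum (f := K) (fun _ _ => Nat.zero_le _) (Finset.mem_univ _)
  have hvM : v.optionElim D.e ∈ coneMon D.cl := D.elim_mem_M.2 (D.Nsupp v hv)
  obtain ⟨r, hr, hrd, hrs⟩ := proj_eq (coneMon D.cl) none D.th D.dg D.th_dg Finset.univ
    ((k • v.optionElim D.e) none) (monomial (k • v.optionElim D.e) 1) (by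
      intro a ha
      rw [coeff_monomial] at ha
      split_ifs at ha with h1
      · rw [h1]
      · simp at ha)
    (fun j => monomial ((k - K ⟨v, hv⟩) • v.optionElim D.e) 1 * g ⟨v, hv⟩ j)
    (fun j => Subalgebra.mul_mem _ (monomial_mem_RM (nsmul_mem hvM _) 1) (hg _ j))
    (by
      simp_rw [mul_assoc]
      rw [← Finset.mul_sum, ← hK ⟨v, hv⟩, monomial_mul, one_mul, ← add_nsmul,
        Nat.sub_add_cancel hk])
  refine ⟨r, hr, fun i a ha => ?_, hrs⟩
  have := hrd i a ha
  have := D.dg_pos i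
  lia

theorem regH (hnd : Nondegenerate f) (J : Finset (Option σ)) (i) (hi : i ∉ J) (s : ℕ)
    (x) (hx : x ∈ RM ℂ (coneMon D.cl)) (hxs : ∀ a, coeff a x ≠ 0 → a none = s)
    (r : Option σ → MvPolynomial (Option σ) ℂ) (hr : ∀ j, r j ∈ RM ℂ (coneMon D.cl))
    (h : x * D.th i = ∑ j ∈ J, r j * D.th j) :
    ∃ r' : Option σ → MvPolynomial (Option σ) ℂ, (∀ j, r' j ∈ RM ℂ (coneMon D.cl)) ∧
      (∀ j a, coeff a (r' j) ≠ 0 → a none + D.dg j = s) ∧ x = ∑ j ∈ J, r' j * D.th j := by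
  classical
  obtain ⟨K, hK⟩ := D.radK hnd
  let Z : Finset (Option σ →₀ ℕ) := insert (Finsupp.single none 1)
    (f.support.image fun v => K • v.optionElim D.e)
  obtain ⟨r1, hr1, h1⟩ := regular_char0 D.cl D.cl_finite D.hX D.th D.th_mem none D.dg D.th_dg
    D.M_finite Z (by
      intro z hz
      rw [Finset.mem_insert] at hz
      rcases hz with rfl | hz
      · refine ⟨fun o => o.elim 1 (fun _ => 0), fun o => ?_, fun o a ha => ?_, ?_⟩
        · cases o with
          | none => exact Subalgebra.one_mem _
          | some i => exact Subalgebra.zero_mem _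
        · cases o with
          | none =>
            simp only [Option.elim, coeff_one] at ha
            split_ifs at ha with h0
            · rw [← h0]; simp
            · simp at ha
          | some i => simp at ha
        · rw [Fintype.sum_option]
          simp [th]
          rfl
      · rw [Finset.mem_image] at hz
        obtain ⟨v, hv, rfl⟩ := hz
        exact hK v hv)
    (D.e * K * f.support.card + 1) (by
      intro b hb hbN
      rcases D.decomp K b hb hbN with ⟨b', hb', h⟩ | ⟨v, hv, _, b', hb', h⟩
      · exact ⟨_, Finset.mem_insert_self _ _, b', hb', h⟩
      · exact ⟨_, Finset.mem_insert_of_mem (Finset.mem_image_of_mem _ hv), b', hb', h⟩)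
    J i hi s x hx hxs r hr h
  exact proj_eq _ none D.th D.dg D.th_dg J s x hxs r1 hr1 h1

theorem regA (hnd : Nondegenerate f) (J : Finset σ) (i : Option σ) (hi : ∀ j ∈ J, i ≠ some j)
    (s : ℤ) (x : MvPolynomial σ ℂ) (hx : x ∈ D.NZ s) (d : ℤ) (hd : d = D.dg i)
    (r : σ → MvPolynomial σ ℂ) (hr : ∀ j, r j ∈ D.NZ (s + d - D.e))
    (h : x * deh (D.th i) = ∑ j ∈ J, r j * Lp f j) :
    ∃ r' : σ → MvPolynomial σ ℂ, (∀ j, r' j ∈ D.NZ (s - D.e)) ∧ x = ∑ j ∈ J, r' j * Lp f j := by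
  classical
  rcases lt_or_ge s 0 with hs | hs
  · exact ⟨0, fun j => Submodule.zero_mem _, by simp [D.NZ_neg hs hx]⟩
  rcases lt_or_ge (s + d - D.e) 0 with hs1 | hs1
  · have h0 : x * deh (D.th i) = 0 := by
      rw [h]; exact Finset.sum_eq_zero fun j _ => by rw [D.NZ_neg hs1 (hr j), zero_mul]
    by_cases hx0 : x = 0
    · exact ⟨0, fun j => Submodule.zero_mem _, by simp [hx0]⟩
    exfalso
    have h1 := (mul_eq_zero.1 h0).resolve_left hx0
    cases i with
    | none => simp [th, deh_X_none] at h1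
    | some i => simp only [dg] at hd; lia
  lift s to ℕ using hs
  obtain ⟨q, hq⟩ := Int.eq_ofNat_of_zero_le hs1
  rw [hq] at hr
  obtain ⟨r1, hr1, hr2, hr3⟩ := D.regH hnd (J.map Function.Embedding.some) i (by
      intro h1
      obtain ⟨j, hj, h2⟩ := Finset.mem_map.1 h1
      exact hi j hj h2.symm) s (hom s x) (D.hom_mem hx) (by
      intro a ha
      rw [coeff_hom] at ha
      by_contra h0
      simp [h0] at ha)
    (fun o => o.elim 0 fun j => hom q (r j)) (by
      intro o
      cases o with
      | none => exact Subalgebra.zero_mem _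
      | some j => exact D.hom_mem (hr j)) (by
      rw [Finset.sum_map]
      have hj : ∀ j ∈ J, (Option.elim (Function.Embedding.some j) 0 fun j => hom q (r j)) *
          D.th (Function.Embedding.some j) = hom (q + D.e) (r j * Lp f j) :=
        fun j _ => hom_mul _ _ _ _
      rw [Finset.sum_congr rfl hj, ← hom_sum, ← h]
      conv_lhs => rw [eq_hom (D.th i) (D.dg i) (D.th_dg i)]
      rw [hom_mul]
      congr 1
      lia)
  rw [Finset.sum_map] at hr3
  have h4 := congrArg deh hr3
  rw [deh_hom, map_sum] at h4
  refine ⟨fun j => deh (r1 (some j)), fun j => ?_, ?_⟩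
  · by_cases h5 : D.e ≤ s
    · have := D.deh_mem (j := s - D.e) (hr1 (some j)) (by
        intro a ha
        have := hr2 _ a ha
        simp only [dg] at this
        lia)
      rw [Nat.cast_sub h5] at this
      exact this
    · have : r1 (some j) = 0 := by
        ext a
        by_contra ha
        have := hr2 _ a ha
        simp only [dg] at this
        lia
      dsimp only
      rw [this, map_zero]
      exact Submodule.zero_mem _
  · rw [h4]
    refine Finset.sum_congr rfl fun j _ => ?_
    rw [map_mul]
    simp [th, deh_hom]

theorem reg (hnd : Nondegenerate f) (J : Finset σ) (i : σ) (hi : i ∉ J)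
    (s : ℤ) (x : MvPolynomial σ ℂ) (hx : x ∈ D.NZ s)
    (r : σ → MvPolynomial σ ℂ) (hr : ∀ j, r j ∈ D.NZ s)
    (h : x * Lp f i = ∑ j ∈ J, r j * Lp f j) :
    ∃ r' : σ → MvPolynomial σ ℂ, (∀ j, r' j ∈ D.NZ (s - D.e)) ∧ x = ∑ j ∈ J, r' j * Lp f j := by
  refine D.regA hnd J (some i) (fun j hj h => hi (by cases h; exact hj)) s x hx D.e rfl r ?_ ?_
  · simpa using hr
  · rw [th, deh_hom]; exact h

theorem reg_t (hnd : Nondegenerate f)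
    (s : ℤ) (x : MvPolynomial σ ℂ) (hx : x ∈ D.NZ s)
    (r : σ → MvPolynomial σ ℂ) (hr : ∀ j, r j ∈ D.NZ (s + 1 - D.e))
    (h : x = ∑ j, r j * Lp f j) :
    ∃ r' : σ → MvPolynomial σ ℂ, (∀ j, r' j ∈ D.NZ (s - D.e)) ∧ x = ∑ j, r' j * Lp f j := by
  refine D.regA hnd Finset.univ none (fun j hj h => by cases h) s x hx 1 rfl r hr ?_
  rw [th, deh_X_none, mul_one]; exact h

theorem mem_L (hnd : Nondegenerate f) (s : ℤ) (x : MvPolynomial σ ℂ) (hx : x ∈ D.NZ s)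
    (hL : x ∈ LIdeal f) :
    ∃ r' : σ → MvPolynomial σ ℂ, (∀ j, r' j ∈ D.NZ (s - D.e)) ∧ x = ∑ j, r' j * Lp f j := by
  classical
  have key : ∀ k : ℕ, ∀ s : ℤ, x ∈ D.NZ s →
      (∃ r : σ → MvPolynomial σ ℂ, (∀ j, r j ∈ D.NZ (s + k - D.e)) ∧ x = ∑ j, r j * Lp f j) →
      ∃ r' : σ → MvPolynomial σ ℂ, (∀ j, r' j ∈ D.NZ (s - D.e)) ∧ x = ∑ j, r' j * Lp f j := by
    intro k
    induction k with
    | zero => intro s _ h; simpa using h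
    | succ k ih =>
      rintro s hx ⟨r, hr, h⟩
      obtain ⟨r1, hr1, h1⟩ := ih (s + 1) (D.NZ_mono (by lia) hx) ⟨r, fun j => by
        have := hr j
        have h2 : s + 1 + (k : ℤ) - D.e = s + ((k + 1 : ℕ) : ℤ) - D.e := by push_cast; ring
        rw [h2]; exact this, h⟩
      exact D.reg_t hnd s x hx r1 hr1 h1
  rw [LIdeal, Ideal.mem_span_range_iff_exists_fun] at hL
  obtain ⟨g, hg⟩ := hL
  let B : ℕ := ∑ j, ∑ m ∈ (g j).support, D.N m
  have hB : ∀ j, g j ∈ D.NZ B := by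
    intro j m hm
    have h1 : D.N m ≤ ∑ m ∈ (g j).support, D.N m :=
      Finset.single_le_sum (f := D.N) (fun _ _ => Nat.zero_le _) (mem_support_iff.2 hm)
    have h2 : ∑ m ∈ (g j).support, D.N m ≤ B :=
      Finset.single_le_sum (f := fun j => ∑ m ∈ (g j).support, D.N m) (fun _ _ => Nat.zero_le _)
        (Finset.mem_univ j)
    exact_mod_cast h1.trans h2
  refine key (B + D.e + s.natAbs) s hx ⟨g, fun j => D.NZ_mono ?_ (hB j), hg.symm⟩
  push_cast
  have := neg_abs_le s
  lia

end NData
end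
end ToricNewton


namespace ToricNewton

section
set_option linter.unusedSectionVars false
set_option linter.unusedSimpArgs false

lemma finrank_map_add {V W : Type*} [AddCommGroup V] [Module ℂ V] [AddCommGroup W] [Module ℂ W]
    (φ : V →ₗ[ℂ] W) (B : Submodule ℂ V) [FiniteDimensional ℂ B] :
    Module.finrank ℂ (B.map φ) + Module.finrank ℂ (B ⊓ LinearMap.ker φ : Submodule ℂ V) =
      Module.finrank ℂ B := by
  rw [← LinearMap.finrank_range_add_finrank_ker (φ.domRestrict B)]
  congr 1
  · rw [LinearMap.range_domRestrict]
  · have h : (B ⊓ LinearMap.ker φ : Submodule ℂ V) =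
        (LinearMap.ker (φ.domRestrict B)).map B.subtype := by
      ext x
      simp [LinearMap.mem_ker, and_comm]
    rw [h, finrank_map_subtype_eq_aux]
where
  finrank_map_subtype_eq_aux {V : Type _} [AddCommGroup V] [Module ℂ V] {B : Submodule ℂ V}
    {K : Submodule ℂ B} : Module.finrank ℂ (K.map B.subtype) = Module.finrank ℂ K :=
    (LinearEquiv.finrank_eq (Submodule.equivMapOfInjective B.subtype B.injective_subtype K)).symm

lemma finrank_gr {V : Type*} [AddCommGroup V] [Module ℂ V] (A B L : Submodule ℂ V) (hAB : A ≤ B)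
    [FiniteDimensional ℂ B] :
    (Module.finrank ℂ ((B ⊔ L).map (A ⊔ L).mkQ) : ℤ) =
      (Module.finrank ℂ B - Module.finrank ℂ (B ⊓ L : Submodule ℂ V)) -
      (Module.finrank ℂ A - Module.finrank ℂ (A ⊓ L : Submodule ℂ V)) := by
  have hA : FiniteDimensional ℂ A := Submodule.finiteDimensional_of_le hAB
  have hBL : FiniteDimensional ℂ (B ⊓ L : Submodule ℂ V) :=
    Submodule.finiteDimensional_of_le inf_le_left
  have h1 : (B ⊔ L).map (A ⊔ L).mkQ = B.map (A ⊔ L).mkQ := by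
    rw [Submodule.map_sup]
    have : L.map (A ⊔ L).mkQ = ⊥ := by
      rw [← LinearMap.le_ker_iff_map, Submodule.ker_mkQ]
      exact le_sup_right
    rw [this, sup_bot_eq]
  have h2 := finrank_map_add (A ⊔ L).mkQ B
  rw [Submodule.ker_mkQ] at h2
  have h3 : B ⊓ (A ⊔ L) = A ⊔ (B ⊓ L) := by
    rw [inf_comm, sup_inf_assoc_of_le _ hAB, inf_comm]
  have h4 := Submodule.finrank_sup_add_finrank_inf_eq A (B ⊓ L)
  have h5 : A ⊓ (B ⊓ L) = A ⊓ L := by rw [← inf_assoc, inf_eq_left.2 hAB]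
  rw [h5] at h4
  rw [h3] at h2
  rw [h1]
  lia

/-- Iterated backward differences. -/
lemma diff_sum (a : ℤ → ℤ) (e : ℤ) (m : ℕ) (s : ℤ) :
    ∑ k ∈ Finset.range (m + 1 + 1), (-1 : ℤ) ^ k * ((m + 1).choose k : ℤ) * a (s - k * e) =
    ∑ k ∈ Finset.range (m + 1), (-1 : ℤ) ^ k * (m.choose k : ℤ) * a (s - k * e) -
    ∑ k ∈ Finset.range (m + 1), (-1 : ℤ) ^ k * (m.choose k : ℤ) * a (s - e - k * e) := by
  rw [Finset.sum_range_succ']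
  simp only [Nat.choose_succ_succ, Nat.cast_add, mul_add, add_mul, Finset.sum_add_distrib]
  have h1 : ∑ k ∈ Finset.range (m + 1), (-1 : ℤ) ^ k * (m.choose k : ℤ) * a (s - k * e) =
      ∑ k ∈ Finset.range (m + 1), (-1 : ℤ) ^ (k + 1) * (m.choose (k + 1) : ℤ) *
        a (s - ((k : ℤ) * e + (1 : ℕ) * e)) + a s := by
    rw [Finset.sum_range_succ' _ m, Finset.sum_range_succ _ m]
    simp [add_mul]
  have h2 : ∑ k ∈ Finset.range (m + 1), (-1 : ℤ) ^ k * (m.choose k : ℤ) * a (s - e - k * e) =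
      - ∑ k ∈ Finset.range (m + 1), (-1 : ℤ) ^ (k + 1) * (m.choose k : ℤ) *
        a (s - ((k : ℤ) * e + (1 : ℕ) * e)) := by
    rw [← Finset.sum_neg_distrib]
    refine Finset.sum_congr rfl fun k _ => ?_
    have : s - ((k : ℤ) * e + (1 : ℕ) * e) = s - e - k * e := by push_cast; ring
    rw [this]; ring
  rw [h1, h2]
  simp
  ring

variable {σ : Type} [Fintype σ] [DecidableEq σ] {f : MvPolynomial σ ℂ}

namespace NData
variable (D : NData f)

lemma NZ_eq (s : ℤ) : D.NZ s = restrictSupport ℂ {m | (D.N m : ℤ) ≤ s} := by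
  ext g
  rw [mem_restrictSupport_iff, mem_NZ]
  constructor
  · intro h m hm
    exact h m (mem_support_iff.1 hm)
  · intro h m hm
    exact h (mem_support_iff.2 hm)

lemma finZ (s : ℤ) : {m | (D.N m : ℤ) ≤ s}.Finite :=
  (D.fin s.toNat).subset fun m hm => by
    rw [Set.mem_ofPred_eq] at hm ⊢
    lia

instance NZ_fd (s : ℤ) : FiniteDimensional ℂ (D.NZ s) := by
  rw [NZ_eq]
  have := (D.finZ s).to_subtype
  exact Module.Finite.of_basis (basisRestrictSupport ℂ _)

lemma NZ_finrank (s : ℤ) : Module.finrank ℂ (D.NZ s) = {m | (D.N m : ℤ) ≤ s}.ncard := by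
  rw [NZ_eq, Module.finrank_eq_nat_card_basis (basisRestrictSupport ℂ _)]
  rfl

lemma NZ_diff (s : ℤ) : (Module.finrank ℂ (D.NZ s) : ℤ) - Module.finrank ℂ (D.NZ (s - 1)) =
    {m | (D.N m : ℤ) = s}.ncard := by
  have h : {m | (D.N m : ℤ) ≤ s} = {m | (D.N m : ℤ) ≤ s - 1} ∪ {m | (D.N m : ℤ) = s} := by
    ext m; simp only [Set.mem_ofPred_eq, Set.mem_union]; lia
  have hfin : {m | (D.N m : ℤ) = s}.Finite := (D.finZ s).subset fun m hm => le_of_eq hm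
  have hdis : Disjoint {m | (D.N m : ℤ) ≤ s - 1} {m | (D.N m : ℤ) = s} := by
    rw [Set.disjoint_left]
    intro m h1 h2
    rw [Set.mem_ofPred_eq] at h1 h2
    lia
  rw [NZ_finrank, NZ_finrank, h, Set.ncard_union_eq hdis (D.finZ _) hfin]
  push_cast; ring

/-- Partial ideals with filtration bounds. -/
noncomputable def IJ (J : Finset σ) (s : ℤ) : Submodule ℂ (MvPolynomial σ ℂ) where
  carrier := {x | ∃ r : σ → MvPolynomial σ ℂ, (∀ j, r j ∈ D.NZ (s - D.e)) ∧
    x = ∑ j ∈ J, r j * Lp f j}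
  zero_mem' := ⟨0, fun _ => Submodule.zero_mem _, by simp⟩
  add_mem' := by
    rintro _ _ ⟨r, hr, rfl⟩ ⟨r', hr', rfl⟩
    exact ⟨r + r', fun j => Submodule.add_mem _ (hr j) (hr' j), by
      simp [add_mul, Finset.sum_add_distrib]⟩
  smul_mem' := by
    rintro c _ ⟨r, hr, rfl⟩
    exact ⟨c • r, fun j => Submodule.smul_mem _ _ (hr j), by
      simp [Finset.smul_sum]⟩

lemma mem_IJ {J : Finset σ} {s : ℤ} {x : MvPolynomial σ ℂ} :
    x ∈ D.IJ J s ↔ ∃ r : σ → MvPolynomial σ ℂ, (∀ j, r j ∈ D.NZ (s - D.e)) ∧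
    x = ∑ j ∈ J, r j * Lp f j := Iff.rfl

lemma IJ_le (J : Finset σ) (s : ℤ) : D.IJ J s ≤ D.NZ s := by
  rintro _ ⟨r, hr, rfl⟩
  refine Submodule.sum_mem _ fun j _ => ?_
  have := D.NZ_mul (hr j) (D.Lp_mem j)
  rwa [sub_add_cancel] at this

instance IJ_fd (J : Finset σ) (s : ℤ) : FiniteDimensional ℂ (D.IJ J s) :=
  Submodule.finiteDimensional_of_le (D.IJ_le J s)

lemma IJ_insert (J : Finset σ) (i : σ) (hi : i ∉ J) (s : ℤ) :
    D.IJ (insert i J) s = D.IJ J s ⊔ (D.NZ (s - D.e)).map (LinearMap.mulRight ℂ (Lp f i)) := by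
  ext x
  rw [Submodule.mem_sup]
  constructor
  · rintro ⟨r, hr, rfl⟩
    refine ⟨_, ⟨r, hr, rfl⟩, _, ⟨r i, hr i, rfl⟩, ?_⟩
    rw [Finset.sum_insert hi, add_comm]; rfl
  · rintro ⟨_, ⟨r, hr, rfl⟩, _, ⟨y, hy, rfl⟩, rfl⟩
    refine ⟨Function.update r i y, fun j => ?_, ?_⟩
    · by_cases h : j = i
      · subst h; simpa using hy
      · simpa [h] using hr j
    · rw [Finset.sum_insert hi, add_comm]
      simp only [Function.update_self, LinearMap.mulRight_apply]
      congr 1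
      refine Finset.sum_congr rfl fun j hj => ?_
      have : j ≠ i := fun h => hi (h ▸ hj)
      simp [this]

lemma IJ_inf (hnd : Nondegenerate f) (J : Finset σ) (i : σ) (hi : i ∉ J) (s : ℤ) :
    D.IJ J s ⊓ (D.NZ (s - D.e)).map (LinearMap.mulRight ℂ (Lp f i)) =
      (D.IJ J (s - D.e)).map (LinearMap.mulRight ℂ (Lp f i)) := by
  ext x
  constructor
  · rintro ⟨⟨r, hr, h⟩, ⟨y, hy, rfl⟩⟩
    exact ⟨y, D.reg hnd J i hi (s - D.e) y hy r hr h, rfl⟩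
  · rintro ⟨y, hy, rfl⟩
    refine ⟨?_, ⟨y, D.IJ_le _ _ hy, rfl⟩⟩
    obtain ⟨r, hr, rfl⟩ := hy
    refine ⟨fun j => r j * Lp f i, fun j => ?_, ?_⟩
    · have := D.NZ_mul (hr j) (D.Lp_mem i)
      rwa [sub_add_cancel] at this
    · simp only [LinearMap.mulRight_apply, Finset.sum_mul]
      exact Finset.sum_congr rfl fun j _ => by ring

lemma Lp_ne (hconv : Convenient f) (i : σ) : Lp f i ≠ 0 := by
  intro h
  obtain ⟨k, hk, hc⟩ := hconv i
  have := coeff_X_mul_pderiv i f (Finsupp.single i k)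
  change coeff _ (Lp f i) = _ at this
  rw [h, coeff_zero] at this
  have := this.symm
  simp [hc] at this
  lia

lemma finrank_mul (hconv : Convenient f) (i : σ) (A : Submodule ℂ (MvPolynomial σ ℂ)) :
    Module.finrank ℂ (A.map (LinearMap.mulRight ℂ (Lp f i))) = Module.finrank ℂ A :=
  (LinearEquiv.finrank_eq (Submodule.equivMapOfInjective (LinearMap.mulRight ℂ (Lp f i))
    (fun a b h => mul_right_cancel₀ (Lp_ne hconv i) h) A)).symm

lemma IJ_step (hconv : Convenient f) (hnd : Nondegenerate f) (J : Finset σ) (i : σ) (hi : i ∉ J)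
    (s : ℤ) : (Module.finrank ℂ (D.IJ (insert i J) s) : ℤ) = Module.finrank ℂ (D.IJ J s) +
      Module.finrank ℂ (D.NZ (s - D.e)) - Module.finrank ℂ (D.IJ J (s - D.e)) := by
  have h := Submodule.finrank_sup_add_finrank_inf_eq (D.IJ J s)
    ((D.NZ (s - D.e)).map (LinearMap.mulRight ℂ (Lp f i)))
  rw [← IJ_insert _ _ _ hi, IJ_inf _ hnd _ _ hi, finrank_mul hconv, finrank_mul hconv] at h
  lia

lemma Q_eq (hconv : Convenient f) (hnd : Nondegenerate f) (J : Finset σ) : ∀ s : ℤ,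
    (Module.finrank ℂ (D.NZ s) : ℤ) - Module.finrank ℂ (D.IJ J s) =
      ∑ k ∈ Finset.range (J.card + 1), (-1 : ℤ) ^ k * (J.card.choose k : ℤ) *
        (Module.finrank ℂ (D.NZ (s - k * D.e)) : ℤ) := by
  induction J using Finset.induction_on with
  | empty =>
    intro s
    have : D.IJ ∅ s = ⊥ := by
      rw [eq_bot_iff]
      rintro _ ⟨r, hr, rfl⟩
      simp
    have h2 : s - ((0 : ℕ) : ℤ) * D.e = s := by simp
    rw [this, Finset.card_empty, zero_add, Finset.sum_range_one, h2]
    simp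
  | insert i J hi ih =>
    intro s
    rw [Finset.card_insert_of_notMem hi,
      diff_sum (fun s => (Module.finrank ℂ (D.NZ s) : ℤ)) D.e J.card s, ← ih s, ← ih (s - D.e),
      D.IJ_step hconv hnd J i hi s]
    ring

lemma inf_L (hnd : Nondegenerate f) (s : ℤ) :
    D.NZ s ⊓ (LIdeal f).restrictScalars ℂ = D.IJ Finset.univ s := by
  ext x
  constructor
  · rintro ⟨h1, h2⟩
    exact D.mem_L hnd s x h1 h2
  · intro h
    refine ⟨D.IJ_le _ _ h, ?_⟩
    obtain ⟨r, hr, rfl⟩ := h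
    change _ ∈ LIdeal f
    exact Ideal.sum_mem _ fun j _ => Ideal.mul_mem_left _ _ (Ideal.subset_span ⟨j, rfl⟩)

lemma main (hconv : Convenient f) (hnd : Nondegenerate f) (s : ℤ) (α : ℝ) (hα : D.e * α = s) :
    (grDim f α : ℤ) = ∑ k ∈ Finset.range (Fintype.card σ + 1),
      (-1 : ℤ) ^ k * ((Fintype.card σ).choose k : ℤ) * ({m | (D.N m : ℤ) = s - k * D.e}.ncard : ℤ) := by
  have he : (0 : ℝ) < D.e := by exact_mod_cast D.he
  have hle : Nle f α = D.NZ s := by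
    ext g
    change (∀ m ∈ g.support, nu f (toR m) ≤ α) ↔ ∀ m, coeff m g ≠ 0 → (D.N m : ℤ) ≤ s
    refine forall_congr' fun m => imp_congr mem_support_iff ?_
    rw [← mul_le_mul_iff_right₀ he, ← D.N_eq, hα]
    exact_mod_cast Iff.rfl
  have hlt : Nlt f α = D.NZ (s - 1) := by
    ext g
    change (∀ m ∈ g.support, nu f (toR m) < α) ↔ ∀ m, coeff m g ≠ 0 → (D.N m : ℤ) ≤ s - 1
    refine forall_congr' fun m => imp_congr mem_support_iff ?_
    rw [← mul_lt_mul_iff_right₀ he, ← D.N_eq, hα, Int.le_sub_one_iff]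
    exact_mod_cast Iff.rfl
  rw [grDim, grN, hle, hlt, finrank_gr _ _ _ (D.NZ_mono (by lia)), D.inf_L hnd, D.inf_L hnd,
    D.Q_eq hconv hnd, D.Q_eq hconv hnd, ← Finset.sum_sub_distrib, Finset.card_univ]
  refine Finset.sum_congr rfl fun k _ => ?_
  rw [← D.NZ_diff]
  have : s - k * D.e - 1 = s - 1 - k * D.e := by ring
  rw [this]; ring

end NData

theorem final {n : ℕ} (f : MvPolynomial (Fin n) ℂ) (hconv : Convenient f)
    (hnd : Nondegenerate f) :
    (∀ β : ℚ, {v : Fin n → ℕ | nu f (natToR v) = (β : ℝ)}.Finite) ∧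
    (∀ α : ℚ, (grDim f (α : ℝ) : ℤ) = ∑ k ∈ Finset.range (n + 1), (-1 : ℤ) ^ k *
      (n.choose k : ℤ) * ({v : Fin n → ℕ | nu f (natToR v) = (α : ℝ) - (k : ℝ)}.ncard : ℤ)) := by
  obtain ⟨D⟩ := exists_NData f hconv
  have he : (0 : ℝ) < D.e := by exact_mod_cast D.he
  have hinj : Function.Injective (fun m : Fin n →₀ ℕ => (m : Fin n → ℕ)) := DFunLike.coe_injective
  have hset : ∀ γ : ℝ, {v : Fin n → ℕ | nu f (natToR v) = γ} =
      (fun m : Fin n →₀ ℕ => (m : Fin n → ℕ)) '' {m | (D.N m : ℝ) = D.e * γ} := by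
    intro γ
    ext v
    simp only [Set.mem_ofPred_eq, Set.mem_image, D.N_eq, mul_right_inj' he.ne']
    constructor
    · intro h
      exact ⟨Finsupp.equivFunOnFinite.symm v, h, by ext i; simp⟩
    · rintro ⟨m, hm, rfl⟩
      exact hm
  constructor
  · intro β
    rw [hset]
    refine Set.Finite.image _ ((D.fin (Nat.ceil ((D.e : ℝ) * β))).subset fun m hm => ?_)
    rw [Set.mem_ofPred_eq] at hm ⊢
    have := Nat.le_ceil ((D.e : ℝ) * β)
    rw [← hm] at this
    rw [← hm]
    exact_mod_cast this
  · intro α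
    by_cases hZint : ∃ s : ℤ, (D.e : ℝ) * α = s
    · obtain ⟨s, hs⟩ := hZint
      rw [D.main hconv hnd s α hs, Fintype.card_fin]
      refine Finset.sum_congr rfl fun k _ => ?_
      rw [hset, Set.ncard_image_of_injective _ hinj]
      congr 4
      ext m
      rw [mul_sub, hs]
      have : (s : ℝ) - D.e * k = ((s - k * D.e : ℤ) : ℝ) := by push_cast; ring
      rw [this]
      exact_mod_cast Iff.rfl
    · have hN : ∀ m k : ℕ, (m : ℝ) ≠ D.e * (α - k) := by
        intro m k h
        apply hZint
        refine ⟨m + D.e * k, ?_⟩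
        push_cast
        rw [h]; ring
      have h0 : Nlt f α = Nle f α := by
        ext g
        refine forall_congr' fun m => forall_congr' fun _ => ?_
        refine ⟨le_of_lt, fun h => lt_of_le_of_ne h fun h1 => hN (D.N m) 0 ?_⟩
        rw [D.N_eq, h1]; simp
      have h1 : grDim f (α : ℝ) = 0 := by
        have : grN f α = ⊥ := by
          rw [grN, ← LinearMap.le_ker_iff_map, Submodule.ker_mkQ, h0]
        rw [grDim, this, finrank_bot]
      rw [h1]
      symm
      push_cast
      refine Finset.sum_eq_zero fun k _ => ?_
      rw [hset]
      have : {m : Fin n →₀ ℕ | (D.N m : ℝ) = D.e * (α - k)} = ∅ := by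
        ext m; simp [hN]
      rw [this]; simp

end
end ToricNewton

open ToricNewton in
/-- finiteness of the level sets of the Newton function, and the
formula `P_{gr^𝒩(ℬ/ℒ)}(z) = (1-z)^n Σ_{v ∈ ℕⁿ} z^{ν(v)}`, coefficientwise. -/
theorem toric_newton_spectrum_series {n : ℕ} (hn : 1 ≤ n) (f : MvPolynomial (Fin n) ℂ)
    (hconv : Convenient f) (hnd : Nondegenerate f) :
    (∀ β : ℚ, {v : Fin n → ℕ | nu f (natToR v) = (β : ℝ)}.Finite) ∧
    (∀ α : ℚ, (grDim f (α : ℝ) : ℤ) =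
      ∑ k ∈ Finset.range (n + 1),
        (-1 : ℤ) ^ k * (n.choose k : ℤ) *
          ({v : Fin n → ℕ | nu f (natToR v) = (α : ℝ) - (k : ℝ)}.ncard : ℤ)) := by
  exact final f hconv hnd
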